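/- Let 0 ≤ α < 1, n > 0, and M > 0 with M(1 − α²) > 2π, let u*(θ) = M/(2π) + cos(θ)/(1 − α²) be the strictly positive energy minimizer of mass M, let m = min u* = M/(2π) − 1/(1 − α²) > 0, and set μ = (1 − α²) mⁿ and ε₀ = ((1 − α²)π/2) m². Let u be a strictly positive classical solution of the thin-film equation ∂_t u + ∂_θ( uⁿ ( ∂_θ³ u + α² ∂_θ u − sin θ ) ) = 0, 2π-periodic in θ, of mass M, whose initial energy satisfies E(u(0,·)) < E(u*) + ε₀. Then there exists a constant K₁ such that ( ∫_{-π}^{π} ( (u − u*)² + (∂_θ(u − u*))² )(t,θ) dθ )^{1/2} ≤ K₁ e^{−μ t} for all t ≥ 0. -/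

import Mathlib

open MeasureTheory Real Set Filter

/-- The thin-film energy `E(v) = (1/2)∫_{-π}^{π} (v'² − α²v²) dθ − ∫_{-π}^{π} v cos θ dθ`. -/
noncomputable def energy (α : ℝ) (u : ℝ → ℝ) : ℝ :=
  (1/2) * (∫ θ in (-π)..π, ((deriv u θ)^2 - α^2 * (u θ)^2)) -
    ∫ θ in (-π)..π, u θ * Real.cos θ

/-- A strictly positive classical solution of the thin-film equation
`∂ₜu + ∂_θ(uⁿ(∂_θ³u + α²∂_θu − sin θ)) = 0` on `(0,∞) × ℝ`: a smooth function on
`[0,∞) × ℝ`, `2π`-periodic and strictly positive, satisfying the equation for `t > 0`. -/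
def IsThinFilmSolution (n α : ℝ) (u : ℝ → ℝ → ℝ) : Prop :=
  ContDiffOn ℝ (⊤ : ℕ∞) (fun p : ℝ × ℝ => u p.1 p.2) (Ici (0:ℝ) ×ˢ (univ : Set ℝ)) ∧
  (∀ t θ : ℝ, 0 ≤ t → 0 < u t θ) ∧
  (∀ t : ℝ, Function.Periodic (u t) (2*π)) ∧
  (∀ t θ : ℝ, 0 < t →
    deriv (fun s => u s θ) t +
      deriv (fun x => u t x ^ n *
        (deriv (deriv (deriv (u t))) x + α^2 * deriv (u t) x - Real.sin x)) θ = 0)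

/-!
The energy excess over the minimizer `u*` is `Q / 2`, where `Q` is the quadratic form
`∫ v'² - α² v²` of `v = u - u*`, and `Q' = -2 ∫ uⁿ ((∂² + α²) v')²`. Since `v` has mean zero, the
spectral gap of `-(∂² + α²)` gives `Q' ≤ -2 (1 - α²) (min u)ⁿ Q`, so everything depends on keeping
`u` away from zero.

The bound on the initial energy gives `∫ v'² ≤ π m²`, where `m = min u*`. Under this bound the
part of `v` of frequency at least two is at least `-0.81 m`, so `u` can come close to zero only with
the help of the first Fourier mode. This is detected by the entropy `∫ G(u)` with `G'' = y⁻ⁿ`: the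
rate `P` at which it decreases is at least `-π m`, and `u ≥ m / 20` as soon as `P ≤ π m / 10`. As
`∫ G(u) + l Q` is nonnegative, its derivative cannot stay below a negative constant; for `l` large,
this makes `Q` arbitrarily small at some time. From then on `min u ≥ m - √(Q / (1 - α²))`, so that
`Q' ≤ -2 μ (1 - k √Q) Q`, and `Q / (1 - k √Q)²` decays at the sharp rate `2 μ`.
-/

open scoped ContDiff

section Interval

variable {a b : ℝ} {f g : ℝ → ℝ}

theorem integral_mul_deriv_eq_neg_of_eq (hf : ContDiff ℝ 1 f) (hg : ContDiff ℝ 1 g)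
    (hfab : f a = f b) (hgab : g a = g b) :
    ∫ x in a..b, f x * deriv g x = -∫ x in a..b, deriv f x * g x := by
  rw [intervalIntegral.integral_mul_deriv_eq_deriv_mul
    (fun x _ => (hf.differentiable one_ne_zero x).hasDerivAt)
    (fun x _ => (hg.differentiable one_ne_zero x).hasDerivAt)
    ((hf.continuous_deriv le_rfl).intervalIntegrable _ _)
    ((hg.continuous_deriv le_rfl).intervalIntegrable _ _), hfab, hgab, sub_self, zero_sub]

theorem sq_intervalIntegral_mul_le (hab : a ≤ b)
    (hf : IntervalIntegrable (fun x => f x ^ 2) volume a b)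
    (hg : IntervalIntegrable (fun x => g x ^ 2) volume a b)
    (hfg : IntervalIntegrable (fun x => f x * g x) volume a b) :
    (∫ x in a..b, f x * g x) ^ 2 ≤ (∫ x in a..b, f x ^ 2) * ∫ x in a..b, g x ^ 2 := by
  have expand (y : ℝ) : ∫ x in a..b, (f x + y * g x) ^ 2 = (∫ x in a..b, g x ^ 2) * (y * y)
      + (2 * ∫ x in a..b, f x * g x) * y + ∫ x in a..b, f x ^ 2 := by
    have e : ∀ x, (f x + y * g x) ^ 2 = f x ^ 2 + 2 * y * (f x * g x) + y ^ 2 * g x ^ 2 :=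
      fun x => by ring
    simp_rw [e]
    rw [intervalIntegral.integral_add (hf.add (hfg.const_mul _)) (hg.const_mul _),
      intervalIntegral.integral_add hf (hfg.const_mul _), intervalIntegral.integral_const_mul,
      intervalIntegral.integral_const_mul]
    ring
  have hdiscrim := discrim_le_zero fun y =>
    (intervalIntegral.integral_nonneg hab fun x _ => sq_nonneg (f x + y * g x)).trans_eq (expand y)
  rw [discrim] at hdiscrim
  linarith

theorem norm_fourierCoeffOn_le_of_integral_eq_zero (hab : a < b) (hf : ContDiff ℝ 1 f)
    (hfab : f a = f b) (h0 : ∫ x in a..b, f x = 0) (k : ℤ) :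
    ‖fourierCoeffOn hab (fun x => (f x : ℂ)) k‖ ≤
      (b - a) / (2 * π) * ‖fourierCoeffOn hab (fun x => ((deriv f x : ℝ) : ℂ)) k‖ := by
  have hba : 0 < b - a := sub_pos.2 hab
  rcases eq_or_ne k 0 with rfl | hk
  · rw [fourierCoeffOn_eq_integral]
    simp only [neg_zero, fourier_zero, one_smul, intervalIntegral.integral_ofReal, h0,
      Complex.ofReal_zero, smul_zero, norm_zero]
    positivity
  · rw [fourierCoeffOn_of_hasDerivAt hab hk
      (fun x _ => (hf.differentiable one_ne_zero x).hasDerivAt.ofReal_comp)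
      ((Complex.continuous_ofReal.comp (hf.continuous_deriv le_rfl)).intervalIntegrable _ _),
      hfab, sub_self, mul_zero, zero_sub]
    have hk1 : (1 : ℝ) ≤ |(k : ℝ)| := by exact_mod_cast Int.one_le_abs hk
    have hnorm : ‖(b : ℂ) - a‖ = b - a := by
      rw [← Complex.ofReal_sub, Complex.norm_real, norm_of_nonneg hba.le]
    simp only [norm_mul, norm_div, norm_neg, norm_one, Complex.norm_I, Complex.norm_intCast,
      Complex.norm_real, Complex.norm_ofNat, norm_of_nonneg pi_pos.le, hnorm, mul_one]
    rw [← mul_assoc, one_div_mul_eq_div]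
    exact mul_le_mul_of_nonneg_right (div_le_div_of_nonneg_left hba.le (by positivity)
      (le_mul_of_one_le_right (by positivity) hk1)) (norm_nonneg _)

theorem integral_sq_le_mul_integral_deriv_sq (hab : a < b) (hf : ContDiff ℝ 1 f)
    (hfab : f a = f b) (h0 : ∫ x in a..b, f x = 0) :
    ∫ x in a..b, f x ^ 2 ≤ ((b - a) / (2 * π)) ^ 2 * ∫ x in a..b, deriv f x ^ 2 := by
  have memLp {g : ℝ → ℝ} (hg : Continuous g) :
      MemLp (fun x => (g x : ℂ)) 2 (volume.restrict (Ioc a b)) :=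
    (memLp_two_iff_integrable_sq_norm (by fun_prop)).2
      (Continuous.intervalIntegrable (by fun_prop) a b).1
  have parseval_f := hasSum_sq_fourierCoeffOn hab (memLp hf.continuous)
  have parseval_deriv := hasSum_sq_fourierCoeffOn hab (memLp (hf.continuous_deriv le_rfl))
  have h := hasSum_le (fun k => by
    rw [← mul_pow]
    gcongr
    exact norm_fourierCoeffOn_le_of_integral_eq_zero hab hf hfab h0 k)
    parseval_f (parseval_deriv.mul_left (((b - a) / (2 * π)) ^ 2))
  simp only [Complex.norm_real, norm_eq_abs, sq_abs, smul_eq_mul] at h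
  rw [mul_left_comm] at h
  exact le_of_mul_le_mul_left h (inv_pos.2 (sub_pos.2 hab))

end Interval

section Periodic

variable {f : ℝ → ℝ}

theorem periodic_deriv {T : ℝ} (hf : Function.Periodic f T) : Function.Periodic (deriv f) T :=
  fun x => by rw [← deriv_comp_add_const, funext hf]

theorem apply_neg_pi_of_periodic (hf : Function.Periodic f (2 * π)) : f (-π) = f π := by
  rw [← hf (-π)]
  ring_nf

theorem integral_comp_add_right_of_periodic (hf : Function.Periodic f (2 * π)) (c : ℝ) :
    ∫ x in (-π)..π, f (x + c) = ∫ x in (-π)..π, f x := by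
  rw [intervalIntegral.integral_comp_add_right]
  convert hf.intervalIntegral_add_eq (-π + c) (-π) using 2 <;> ring

theorem integral_deriv_eq_zero_of_periodic (hf : ContDiff ℝ 1 f)
    (pf : Function.Periodic f (2 * π)) : ∫ x in (-π)..π, deriv f x = 0 := by
  rw [intervalIntegral.integral_deriv_eq_sub (fun x _ => hf.differentiable one_ne_zero x)
    ((hf.continuous_deriv le_rfl).intervalIntegrable _ _), apply_neg_pi_of_periodic pf, sub_self]

theorem integral_mul_deriv_of_periodic {g : ℝ → ℝ} (hf : ContDiff ℝ 1 f) (hg : ContDiff ℝ 1 g)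
    (pf : Function.Periodic f (2 * π)) (pg : Function.Periodic g (2 * π)) :
    ∫ x in (-π)..π, f x * deriv g x = -∫ x in (-π)..π, deriv f x * g x :=
  integral_mul_deriv_eq_neg_of_eq hf hg (apply_neg_pi_of_periodic pf) (apply_neg_pi_of_periodic pg)

theorem integral_sq_le_integral_deriv_sq_of_periodic (hf : ContDiff ℝ 1 f)
    (pf : Function.Periodic f (2 * π)) (h0 : ∫ x in (-π)..π, f x = 0) :
    ∫ x in (-π)..π, f x ^ 2 ≤ ∫ x in (-π)..π, deriv f x ^ 2 := by
  have h := integral_sq_le_mul_integral_deriv_sq (by linarith [pi_pos]) hf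
    (apply_neg_pi_of_periodic pf) h0
  rwa [sub_neg_eq_add, ← two_mul, div_self two_pi_pos.ne', one_pow, one_mul] at h

theorem integral_deriv_mul_sin (hf : ContDiff ℝ 1 f) (pf : Function.Periodic f (2 * π)) :
    ∫ x in (-π)..π, deriv f x * sin x = -∫ x in (-π)..π, f x * cos x := by
  rw [← neg_eq_iff_eq_neg, ← integral_mul_deriv_of_periodic hf contDiff_sin pf sin_periodic,
    Real.deriv_sin]

theorem integral_deriv_mul_cos (hf : ContDiff ℝ 1 f) (pf : Function.Periodic f (2 * π)) :
    ∫ x in (-π)..π, deriv f x * cos x = ∫ x in (-π)..π, f x * sin x := by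
  rw [← neg_inj, ← integral_mul_deriv_of_periodic hf contDiff_cos pf cos_periodic, deriv_cos']
  simp

theorem integral_id_mul_deriv (hf : ContDiff ℝ 1 f) (pf : Function.Periodic f (2 * π)) :
    ∫ x in (-π)..π, x * deriv f x = 2 * π * f π - ∫ x in (-π)..π, f x := by
  rw [intervalIntegral.integral_mul_deriv_eq_deriv_mul (fun x _ => hasDerivAt_id' x)
    (fun x _ => (hf.differentiable one_ne_zero x).hasDerivAt) intervalIntegrable_const
    ((hf.continuous_deriv le_rfl).intervalIntegrable _ _), apply_neg_pi_of_periodic pf]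
  simp only [one_mul]
  ring

theorem integral_comp_add_right_mul_cos (hf : Continuous f) (pf : Function.Periodic f (2 * π))
    (c : ℝ) : ∫ x in (-π)..π, f (x + c) * cos x =
      cos c * (∫ x in (-π)..π, f x * cos x) + sin c * ∫ x in (-π)..π, f x * sin x := by
  have pg : Function.Periodic (fun x => f x * cos (x - c)) (2 * π) := fun x => by
    simp only [pf x, add_sub_right_comm, cos_add_two_pi]
  have h := integral_comp_add_right_of_periodic pg c
  simp only [add_sub_cancel_right] at h
  have hi {g : ℝ → ℝ} (hg : Continuous g) : IntervalIntegrable g volume (-π) π :=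
    hg.intervalIntegrable _ _
  rw [h, ← intervalIntegral.integral_const_mul, ← intervalIntegral.integral_const_mul,
    ← intervalIntegral.integral_add (hi (by fun_prop)) (hi (by fun_prop))]
  congr 1 with x
  rw [cos_sub]
  ring

theorem integral_sin_sq_period : ∫ x in (-π)..π, sin x ^ 2 = π := by
  rw [integral_sin_sq]; simp

theorem integral_cos_sq_period : ∫ x in (-π)..π, cos x ^ 2 = π := by
  rw [integral_cos_sq]; simp

theorem integral_sin_mul_cos_period : ∫ x in (-π)..π, sin x * cos x = 0 := by
  rw [integral_sin_mul_cos₁]; simp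

theorem integral_id_mul_sin_period : ∫ x in (-π)..π, x * sin x = 2 * π := by
  simpa using integral_id_mul_deriv contDiff_cos cos_periodic

/-- Since `f` is orthogonal to the first Fourier modes, `x / (2π) - sin x / π` still represents
evaluation at `π`, and it has a smaller norm than `x / (2π)`. -/
theorem sq_apply_pi_le (hf : ContDiff ℝ 1 f) (pf : Function.Periodic f (2 * π))
    (h0 : ∫ x in (-π)..π, f x = 0) (hcos : ∫ x in (-π)..π, f x * cos x = 0) :
    f π ^ 2 ≤ (π / 6 - 1 / π) * ∫ x in (-π)..π, deriv f x ^ 2 := by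
  have : Continuous (deriv f) := hf.continuous_deriv le_rfl
  have hi {g : ℝ → ℝ} (hg : Continuous g) : IntervalIntegrable g volume (-π) π :=
    hg.intervalIntegrable _ _
  have hkernel : ∫ x in (-π)..π, (x / (2 * π) - sin x / π) * deriv f x = f π := by
    have e (x : ℝ) : (x / (2 * π) - sin x / π) * deriv f x =
        1 / (2 * π) * (x * deriv f x) - 1 / π * (deriv f x * sin x) := by
      field_simp
    simp_rw [e]
    rw [intervalIntegral.integral_sub (hi (by fun_prop)) (hi (by fun_prop)),
      intervalIntegral.integral_const_mul, intervalIntegral.integral_const_mul,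
      integral_id_mul_deriv hf pf, integral_deriv_mul_sin hf pf, h0, hcos]
    field_simp
    ring
  have hnorm : ∫ x in (-π)..π, (x / (2 * π) - sin x / π) ^ 2 = π / 6 - 1 / π := by
    have e (x : ℝ) : (x / (2 * π) - sin x / π) ^ 2 =
        1 / (4 * π ^ 2) * x ^ 2 - 1 / π ^ 2 * (x * sin x) + 1 / π ^ 2 * sin x ^ 2 := by
      field_simp
      ring
    simp_rw [e]
    rw [intervalIntegral.integral_add (hi (by fun_prop)) (hi (by fun_prop)),
      intervalIntegral.integral_sub (hi (by fun_prop)) (hi (by fun_prop))]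
    simp only [intervalIntegral.integral_const_mul, integral_sin_sq_period,
      integral_id_mul_sin_period, integral_pow]
    field_simp
    ring
  rw [← hkernel, ← hnorm]
  exact sq_intervalIntegral_mul_le (by linarith [pi_pos]) (hi (by fun_prop)) (hi (by fun_prop))
    (hi (by fun_prop))

theorem sq_le_mul_integral_deriv_sq (hf : ContDiff ℝ 1 f) (pf : Function.Periodic f (2 * π))
    (h0 : ∫ x in (-π)..π, f x = 0) (hcos : ∫ x in (-π)..π, f x * cos x = 0)
    (hsin : ∫ x in (-π)..π, f x * sin x = 0) (y : ℝ) :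
    f y ^ 2 ≤ (π / 6 - 1 / π) * ∫ x in (-π)..π, deriv f x ^ 2 := by
  have h := sq_apply_pi_le (f := fun x => f (x + (y - π))) (by fun_prop)
    (fun x => by simp only [add_right_comm x, pf _])
    (by rw [integral_comp_add_right_of_periodic pf, h0])
    (by rw [integral_comp_add_right_mul_cos hf.continuous pf, hcos, hsin]; simp)
  simp only [deriv_comp_add_const, add_sub_cancel] at h
  rwa [integral_comp_add_right_of_periodic (f := fun x => deriv f x ^ 2)
    fun x => by simp only [periodic_deriv pf x]] at h

end Periodic

section FirstMode

variable {f : ℝ → ℝ}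

/-- The coefficient of `cos` in the Fourier series of a `2π`-periodic function. -/
noncomputable def cosCoeff (f : ℝ → ℝ) : ℝ := (∫ x in (-π)..π, f x * cos x) / π

/-- The coefficient of `sin` in the Fourier series of a `2π`-periodic function. -/
noncomputable def sinCoeff (f : ℝ → ℝ) : ℝ := (∫ x in (-π)..π, f x * sin x) / π

/-- The part of the Fourier series of a `2π`-periodic function of frequency exactly one. -/
noncomputable def firstMode (f : ℝ → ℝ) (x : ℝ) : ℝ := cosCoeff f * cos x + sinCoeff f * sin x

/-- The part of a mean-zero `2π`-periodic function of frequency at least two. -/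
noncomputable def highModes (f : ℝ → ℝ) (x : ℝ) : ℝ := f x - firstMode f x

theorem integral_mul_cos_eq (f : ℝ → ℝ) : ∫ x in (-π)..π, f x * cos x = π * cosCoeff f :=
  (mul_div_cancel₀ _ pi_ne_zero).symm

theorem integral_mul_sin_eq (f : ℝ → ℝ) : ∫ x in (-π)..π, f x * sin x = π * sinCoeff f :=
  (mul_div_cancel₀ _ pi_ne_zero).symm

theorem sq_firstMode_le (f : ℝ → ℝ) (x : ℝ) :
    firstMode f x ^ 2 ≤ cosCoeff f ^ 2 + sinCoeff f ^ 2 := by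
  rw [firstMode]
  nlinarith [sq_nonneg (cosCoeff f * sin x - sinCoeff f * cos x), sin_sq_add_cos_sq x]

theorem neg_add_le_mul_cos_add_firstMode {x s : ℝ} (hx : 0 ≤ x) (hs : 0 ≤ s)
    (h : cosCoeff f ^ 2 + sinCoeff f ^ 2 ≤ x * (s - cosCoeff f)) (y : ℝ) :
    -(x + s) ≤ x * cos y + firstMode f y := by
  have hamplitude : (x * cos y + firstMode f y) ^ 2 ≤ (x + cosCoeff f) ^ 2 + sinCoeff f ^ 2 := by
    rw [firstMode]
    nlinarith [sq_nonneg ((x + cosCoeff f) * sin y - sinCoeff f * cos y), sin_sq_add_cos_sq y]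
  refine (abs_le_of_sq_le_sq' (hamplitude.trans ?_) (by positivity)).1
  nlinarith [sq_nonneg (cosCoeff f), sq_nonneg (sinCoeff f)]

theorem contDiff_highModes {k : WithTop ℕ∞} (hf : ContDiff ℝ k f) :
    ContDiff ℝ k (highModes f) := by
  unfold highModes firstMode
  fun_prop

theorem periodic_highModes (pf : Function.Periodic f (2 * π)) :
    Function.Periodic (highModes f) (2 * π) := fun x => by
  simp only [highModes, firstMode, pf x, cos_add_two_pi, sin_add_two_pi]

theorem integral_highModes (hf : Continuous f) :
    ∫ x in (-π)..π, highModes f x = ∫ x in (-π)..π, f x := by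
  simp (disch := exact Continuous.intervalIntegrable (by fun_prop) _ _) only [highModes, firstMode,
    intervalIntegral.integral_sub, intervalIntegral.integral_add,
    intervalIntegral.integral_const_mul]
  simp

theorem integral_highModes_mul_cos (hf : Continuous f) :
    ∫ x in (-π)..π, highModes f x * cos x = 0 := by
  have e (x : ℝ) : highModes f x * cos x =
      f x * cos x - (cosCoeff f * cos x ^ 2 + sinCoeff f * (sin x * cos x)) := by
    rw [highModes, firstMode]
    ring
  simp (disch := exact Continuous.intervalIntegrable (by fun_prop) _ _) only [e,
    intervalIntegral.integral_sub, intervalIntegral.integral_add,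
    intervalIntegral.integral_const_mul, integral_mul_cos_eq f, integral_cos_sq_period,
    integral_sin_mul_cos_period]
  ring

theorem integral_highModes_mul_sin (hf : Continuous f) :
    ∫ x in (-π)..π, highModes f x * sin x = 0 := by
  have e (x : ℝ) : highModes f x * sin x =
      f x * sin x - (cosCoeff f * (sin x * cos x) + sinCoeff f * sin x ^ 2) := by
    rw [highModes, firstMode]
    ring
  simp (disch := exact Continuous.intervalIntegrable (by fun_prop) _ _) only [e,
    intervalIntegral.integral_sub, intervalIntegral.integral_add,
    intervalIntegral.integral_const_mul, integral_mul_sin_eq f, integral_sin_sq_period,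
    integral_sin_mul_cos_period]
  ring

theorem deriv_highModes (hf : Differentiable ℝ f) (x : ℝ) :
    deriv (highModes f) x = deriv f x - (sinCoeff f * cos x - cosCoeff f * sin x) := by
  refine (((hf x).hasDerivAt.sub (((hasDerivAt_cos x).const_mul (cosCoeff f)).add
    ((hasDerivAt_sin x).const_mul (sinCoeff f)))).congr_deriv ?_).deriv
  ring

theorem integral_deriv_highModes_sq (hf : ContDiff ℝ 1 f) (pf : Function.Periodic f (2 * π)) :
    ∫ x in (-π)..π, deriv (highModes f) x ^ 2 =
      (∫ x in (-π)..π, deriv f x ^ 2) - π * (cosCoeff f ^ 2 + sinCoeff f ^ 2) := by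
  have : Continuous (deriv f) := hf.continuous_deriv le_rfl
  have e (x : ℝ) : deriv (highModes f) x ^ 2 =
      deriv f x ^ 2 - 2 * sinCoeff f * (deriv f x * cos x) + 2 * cosCoeff f * (deriv f x * sin x)
        + sinCoeff f ^ 2 * cos x ^ 2 + cosCoeff f ^ 2 * sin x ^ 2
        - 2 * cosCoeff f * sinCoeff f * (sin x * cos x) := by
    rw [deriv_highModes (hf.differentiable one_ne_zero)]
    ring
  simp (disch := exact Continuous.intervalIntegrable (by fun_prop) _ _) only [e,
    intervalIntegral.integral_sub, intervalIntegral.integral_add,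
    intervalIntegral.integral_const_mul, integral_deriv_mul_cos hf pf,
    integral_deriv_mul_sin hf pf, integral_mul_cos_eq f, integral_mul_sin_eq f,
    integral_cos_sq_period, integral_sin_sq_period, integral_sin_mul_cos_period]
  ring

theorem sq_highModes_le (hf : ContDiff ℝ 1 f) (pf : Function.Periodic f (2 * π))
    (h0 : ∫ x in (-π)..π, f x = 0) (y : ℝ) :
    highModes f y ^ 2 ≤ (π / 6 - 1 / π) *
      ((∫ x in (-π)..π, deriv f x ^ 2) - π * (cosCoeff f ^ 2 + sinCoeff f ^ 2)) := by
  rw [← integral_deriv_highModes_sq hf pf]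
  exact sq_le_mul_integral_deriv_sq (contDiff_highModes hf) (periodic_highModes pf)
    ((integral_highModes hf.continuous).trans h0) (integral_highModes_mul_cos hf.continuous)
    (integral_highModes_mul_sin hf.continuous) y

theorem pi_mul_sq_cosCoeff_add_sq_sinCoeff_le (hf : ContDiff ℝ 1 f)
    (pf : Function.Periodic f (2 * π)) :
    π * (cosCoeff f ^ 2 + sinCoeff f ^ 2) ≤ ∫ x in (-π)..π, deriv f x ^ 2 := by
  rw [← sub_nonneg, ← integral_deriv_highModes_sq hf pf]
  exact intervalIntegral.integral_nonneg (by linarith [pi_pos]) fun x _ => sq_nonneg _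

/-- The constant is an upper bound for `√(π² / 6 - 1)`. That it is smaller than `1` is what prevents
the high modes alone from bringing a film of minimal height `m` down to zero. -/
theorem neg_mul_le_highModes (hf : ContDiff ℝ 1 f) (pf : Function.Periodic f (2 * π))
    (h0 : ∫ x in (-π)..π, f x = 0) {m : ℝ} (hm : 0 ≤ m)
    (hD : ∫ x in (-π)..π, deriv f x ^ 2 ≤ π * m ^ 2) (y : ℝ) :
    -(0.81 * m) ≤ highModes f y := by
  have hconst : 0 ≤ π / 6 - 1 / π := by
    rw [sub_nonneg, div_le_div_iff₀ pi_pos (by norm_num)]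
    nlinarith [pi_gt_three]
  refine (abs_le_of_sq_le_sq' ?_ (by positivity)).1
  calc highModes f y ^ 2
      ≤ (π / 6 - 1 / π) * ((∫ x in (-π)..π, deriv f x ^ 2) -
          π * (cosCoeff f ^ 2 + sinCoeff f ^ 2)) := sq_highModes_le hf pf h0 y
    _ ≤ (π / 6 - 1 / π) * (π * m ^ 2) := by
      gcongr
      exact (sub_le_self _ (by positivity)).trans hD
    _ = (π ^ 2 / 6 - 1) * m ^ 2 := by field_simp
    _ ≤ 0.81 ^ 2 * m ^ 2 := by
      gcongr
      nlinarith [pi_pos, pi_lt_d2]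
    _ = (0.81 * m) ^ 2 := (mul_pow _ _ _).symm

theorem sq_le_integral_deriv_sq (hf : ContDiff ℝ 1 f) (pf : Function.Periodic f (2 * π))
    (h0 : ∫ x in (-π)..π, f x = 0) (y : ℝ) : f y ^ 2 ≤ ∫ x in (-π)..π, deriv f x ^ 2 := by
  have hbessel := pi_mul_sq_cosCoeff_add_sq_sinCoeff_le hf pf
  have hconst : π / 6 - 1 / π ≤ 1 / 3 := by
    rw [div_sub_div _ _ (by norm_num) pi_ne_zero, div_le_div_iff₀ (by positivity) (by norm_num)]
    nlinarith [pi_gt_three, pi_lt_d2]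
  have : 0 ≤ cosCoeff f ^ 2 + sinCoeff f ^ 2 := by positivity
  calc f y ^ 2 = (highModes f y + firstMode f y) ^ 2 := by rw [highModes, sub_add_cancel]
    _ ≤ 2 * (highModes f y ^ 2 + firstMode f y ^ 2) := add_sq_le
    _ ≤ 2 * (1 / 3 * ((∫ x in (-π)..π, deriv f x ^ 2) - π * (cosCoeff f ^ 2 + sinCoeff f ^ 2))
        + (cosCoeff f ^ 2 + sinCoeff f ^ 2)) := by
      gcongr
      · exact (sq_highModes_le hf pf h0 y).trans
          (mul_le_mul_of_nonneg_right hconst (sub_nonneg.2 hbessel))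
      · exact sq_firstMode_le f y
    _ ≤ ∫ x in (-π)..π, deriv f x ^ 2 := by nlinarith [pi_gt_three]

end FirstMode

/-- Smooth `2π`-periodic functions, that is smooth functions on the circle. -/
structure IsSmoothPeriodic (f : ℝ → ℝ) : Prop where
  contDiff : ContDiff ℝ ∞ f
  periodic : Function.Periodic f (2 * π)

namespace IsSmoothPeriodic

variable {f g : ℝ → ℝ}

theorem contDiff_one (hf : IsSmoothPeriodic f) : ContDiff ℝ 1 f :=
  hf.contDiff.of_le (mod_cast le_top)

theorem continuous (hf : IsSmoothPeriodic f) : Continuous f := hf.contDiff.continuous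

theorem differentiable (hf : IsSmoothPeriodic f) : Differentiable ℝ f :=
  hf.contDiff.differentiable (by simp)

theorem deriv (hf : IsSmoothPeriodic f) : IsSmoothPeriodic (deriv f) :=
  ⟨(contDiff_infty_iff_deriv.1 hf.contDiff).2, periodic_deriv hf.periodic⟩

theorem add (hf : IsSmoothPeriodic f) (hg : IsSmoothPeriodic g) : IsSmoothPeriodic (f + g) :=
  ⟨hf.contDiff.add hg.contDiff, hf.periodic.add hg.periodic⟩

theorem sub (hf : IsSmoothPeriodic f) (hg : IsSmoothPeriodic g) : IsSmoothPeriodic (f - g) :=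
  ⟨hf.contDiff.sub hg.contDiff, hf.periodic.sub hg.periodic⟩

theorem const_mul (c : ℝ) (hf : IsSmoothPeriodic f) : IsSmoothPeriodic fun x => c * f x :=
  ⟨contDiff_const.mul hf.contDiff, hf.periodic.comp (c * ·)⟩

end IsSmoothPeriodic

section QuadForm

variable {α : ℝ} {v z : ℝ → ℝ}

/-- The quadratic part `∫ v'² - α² v²` of twice the thin-film energy. -/
noncomputable def quadForm (α : ℝ) (v : ℝ → ℝ) : ℝ :=
  ∫ θ in (-π)..π, (deriv v θ ^ 2 - α ^ 2 * v θ ^ 2)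

/-- The operator `∂² + α²`, minus the gradient of `quadForm α / 2` in `L²`. -/
noncomputable def helmholtz (α : ℝ) (v : ℝ → ℝ) (θ : ℝ) : ℝ := deriv (deriv v) θ + α ^ 2 * v θ

theorem isSmoothPeriodic_helmholtz (hv : IsSmoothPeriodic v) :
    IsSmoothPeriodic (helmholtz α v) :=
  hv.deriv.deriv.add (hv.const_mul (α ^ 2))

theorem deriv_helmholtz (hv : IsSmoothPeriodic v) :
    deriv (helmholtz α v) = helmholtz α (deriv v) := by
  funext θ
  exact ((hv.deriv.deriv.differentiable θ).hasDerivAt.add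
    ((hv.differentiable θ).hasDerivAt.const_mul (α ^ 2))).deriv

theorem helmholtz_sub (hv : IsSmoothPeriodic v) (hz : IsSmoothPeriodic z) (θ : ℝ) :
    helmholtz α (v - z) θ = helmholtz α v θ - helmholtz α z θ := by
  have e : deriv (v - z) = deriv v - deriv z :=
    funext fun x => deriv_sub (hv.differentiable x) (hz.differentiable x)
  simp only [helmholtz, e, Pi.sub_apply,
    deriv_sub (hv.deriv.differentiable θ) (hz.deriv.differentiable θ)]
  ring

theorem integral_deriv_mul_deriv_sub (hv : IsSmoothPeriodic v) (hz : IsSmoothPeriodic z) :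
    ∫ θ in (-π)..π, (deriv v θ * deriv z θ - α ^ 2 * (v θ * z θ)) =
      -∫ θ in (-π)..π, helmholtz α v θ * z θ := by
  have hv0 := hv.continuous
  have hv1 := hv.deriv.continuous
  have hv2 := hv.deriv.deriv.continuous
  have hz0 := hz.continuous
  have hz1 := hz.deriv.continuous
  simp (disch := exact Continuous.intervalIntegrable (by fun_prop) _ _) only [helmholtz, add_mul,
    mul_assoc, intervalIntegral.integral_sub, intervalIntegral.integral_add,
    intervalIntegral.integral_const_mul, integral_mul_deriv_of_periodic hv.deriv.contDiff_one
      hz.contDiff_one hv.deriv.periodic hz.periodic]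
  ring

theorem quadForm_eq_neg_integral (hv : IsSmoothPeriodic v) :
    quadForm α v = -∫ θ in (-π)..π, helmholtz α v θ * v θ := by
  simp only [quadForm, sq (deriv v _), sq (v _), integral_deriv_mul_deriv_sub hv hv]

theorem quadForm_add (hv : IsSmoothPeriodic v) (hz : IsSmoothPeriodic z) :
    quadForm α (v + z) =
      quadForm α v + quadForm α z - 2 * ∫ θ in (-π)..π, helmholtz α v θ * z θ := by
  have hv0 := hv.continuous
  have hv1 := hv.deriv.continuous
  have hz0 := hz.continuous
  have hz1 := hz.deriv.continuous
  have e (θ : ℝ) : deriv (v + z) θ ^ 2 - α ^ 2 * (v + z) θ ^ 2 =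
      (deriv v θ ^ 2 - α ^ 2 * v θ ^ 2) + (deriv z θ ^ 2 - α ^ 2 * z θ ^ 2) +
        2 * (deriv v θ * deriv z θ - α ^ 2 * (v θ * z θ)) := by
    rw [deriv_add (hv.differentiable θ) (hz.differentiable θ), Pi.add_apply]
    ring
  simp_rw [quadForm, e]
  rw [intervalIntegral.integral_add (Continuous.intervalIntegrable (by fun_prop) _ _)
      (Continuous.intervalIntegrable (by fun_prop) _ _),
    intervalIntegral.integral_add (Continuous.intervalIntegrable (by fun_prop) _ _)
      (Continuous.intervalIntegrable (by fun_prop) _ _),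
    intervalIntegral.integral_const_mul, integral_deriv_mul_deriv_sub hv hz]
  ring

theorem integral_helmholtz_mul_comm (hv : IsSmoothPeriodic v) (hz : IsSmoothPeriodic z) :
    ∫ θ in (-π)..π, helmholtz α v θ * z θ = ∫ θ in (-π)..π, helmholtz α z θ * v θ := by
  rw [← neg_inj, ← integral_deriv_mul_deriv_sub hv hz, ← integral_deriv_mul_deriv_sub hz hv]
  simp only [mul_comm]

theorem integral_helmholtz (hv : IsSmoothPeriodic v) (h0 : ∫ θ in (-π)..π, v θ = 0) :
    ∫ θ in (-π)..π, helmholtz α v θ = 0 := by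
  have hv0 := hv.continuous
  have hv2 := hv.deriv.deriv.continuous
  simp (disch := exact Continuous.intervalIntegrable (by fun_prop) _ _) only [helmholtz,
    intervalIntegral.integral_add, intervalIntegral.integral_const_mul, h0,
    integral_deriv_eq_zero_of_periodic hv.deriv.contDiff_one hv.deriv.periodic, mul_zero, add_zero]

theorem quadForm_eq_integral_sub (hv : IsSmoothPeriodic v) : quadForm α v =
    (∫ θ in (-π)..π, deriv v θ ^ 2) - α ^ 2 * ∫ θ in (-π)..π, v θ ^ 2 := by
  have hv0 := hv.continuous
  have hv1 := hv.deriv.continuous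
  simp (disch := exact Continuous.intervalIntegrable (by fun_prop) _ _) only [quadForm,
    intervalIntegral.integral_sub, intervalIntegral.integral_const_mul]

theorem integral_sq_le_integral_deriv_sq (hv : IsSmoothPeriodic v)
    (h0 : ∫ θ in (-π)..π, v θ = 0) :
    ∫ θ in (-π)..π, v θ ^ 2 ≤ ∫ θ in (-π)..π, deriv v θ ^ 2 :=
  integral_sq_le_integral_deriv_sq_of_periodic hv.contDiff_one hv.periodic h0

theorem one_sub_sq_mul_integral_deriv_sq_le_quadForm (hv : IsSmoothPeriodic v)
    (h0 : ∫ θ in (-π)..π, v θ = 0) :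
    (1 - α ^ 2) * ∫ θ in (-π)..π, deriv v θ ^ 2 ≤ quadForm α v := by
  rw [quadForm_eq_integral_sub hv]
  nlinarith [mul_le_mul_of_nonneg_left (integral_sq_le_integral_deriv_sq hv h0) (sq_nonneg α)]

theorem integral_deriv_sq_le (hα : α ^ 2 < 1) (hv : IsSmoothPeriodic v)
    (h0 : ∫ θ in (-π)..π, v θ = 0) :
    ∫ θ in (-π)..π, deriv v θ ^ 2 ≤ quadForm α v / (1 - α ^ 2) :=
  (le_div_iff₀' (sub_pos.2 hα)).2 (one_sub_sq_mul_integral_deriv_sq_le_quadForm hv h0)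

theorem quadForm_nonneg (hα : α ^ 2 ≤ 1) (hv : IsSmoothPeriodic v)
    (h0 : ∫ θ in (-π)..π, v θ = 0) : 0 ≤ quadForm α v :=
  (mul_nonneg (sub_nonneg.2 hα) (intervalIntegral.integral_nonneg (by linarith [pi_pos])
    fun _ _ => sq_nonneg _)).trans (one_sub_sq_mul_integral_deriv_sq_le_quadForm hv h0)

theorem sqrt_integral_sq_add_deriv_sq_le (hα : α ^ 2 < 1) (hv : IsSmoothPeriodic v)
    (h0 : ∫ θ in (-π)..π, v θ = 0) :
    √(∫ θ in (-π)..π, (v θ ^ 2 + deriv v θ ^ 2)) ≤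
      √(2 / (1 - α ^ 2)) * √(quadForm α v) := by
  have hv0 := hv.continuous
  have hv1 := hv.deriv.continuous
  rw [← sqrt_mul' _ (quadForm_nonneg hα.le hv h0), intervalIntegral.integral_add
    (Continuous.intervalIntegrable (by fun_prop) _ _)
    (Continuous.intervalIntegrable (by fun_prop) _ _), div_mul_eq_mul_div, mul_div_assoc]
  refine sqrt_le_sqrt ?_
  linarith [integral_sq_le_integral_deriv_sq hv h0, integral_deriv_sq_le hα hv h0]

theorem one_sub_sq_mul_quadForm_le_integral_helmholtz_sq (hα : α ^ 2 ≤ 1)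
    (hv : IsSmoothPeriodic v) (h0 : ∫ θ in (-π)..π, v θ = 0) :
    (1 - α ^ 2) * quadForm α v ≤ ∫ θ in (-π)..π, helmholtz α v θ ^ 2 := by
  have hv0 := hv.continuous
  have hz0 := (isSmoothPeriodic_helmholtz (α := α) hv).continuous
  have hsq : 0 ≤ ∫ θ in (-π)..π, (helmholtz α v θ + (1 - α ^ 2) * v θ) ^ 2 :=
    intervalIntegral.integral_nonneg (by linarith [pi_pos]) fun _ _ => sq_nonneg _
  have expand : ∫ θ in (-π)..π, (helmholtz α v θ + (1 - α ^ 2) * v θ) ^ 2 =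
      (∫ θ in (-π)..π, helmholtz α v θ ^ 2) - 2 * (1 - α ^ 2) * quadForm α v +
        (1 - α ^ 2) ^ 2 * ∫ θ in (-π)..π, v θ ^ 2 := by
    have e (θ : ℝ) : (helmholtz α v θ + (1 - α ^ 2) * v θ) ^ 2 = helmholtz α v θ ^ 2 +
        2 * (1 - α ^ 2) * (helmholtz α v θ * v θ) + (1 - α ^ 2) ^ 2 * v θ ^ 2 := by ring
    rw [quadForm_eq_neg_integral hv]
    simp (disch := exact Continuous.intervalIntegrable (by fun_prop) _ _) only [e,
      intervalIntegral.integral_add, intervalIntegral.integral_const_mul]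
    ring
  have hquad : (1 - α ^ 2) * ∫ θ in (-π)..π, v θ ^ 2 ≤ quadForm α v := by
    rw [quadForm_eq_integral_sub hv]
    linarith [integral_sq_le_integral_deriv_sq hv h0]
  nlinarith

theorem one_sub_sq_mul_quadForm_le_integral_helmholtz_deriv_sq (hα : α ^ 2 ≤ 1)
    (hv : IsSmoothPeriodic v) (h0 : ∫ θ in (-π)..π, v θ = 0) :
    (1 - α ^ 2) * quadForm α v ≤ ∫ θ in (-π)..π, helmholtz α (deriv v) θ ^ 2 := by
  rw [← deriv_helmholtz hv]
  exact (one_sub_sq_mul_quadForm_le_integral_helmholtz_sq hα hv h0).trans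
    (integral_sq_le_integral_deriv_sq (isSmoothPeriodic_helmholtz hv) (integral_helmholtz hv h0))

end QuadForm

section Minimizer

variable {α M : ℝ} {f : ℝ → ℝ}

/-- The critical point of mass `M` of the thin-film energy. -/
noncomputable def minimizer (α M θ : ℝ) : ℝ := M / (2 * π) + cos θ / (1 - α ^ 2)

/-- The minimum of `minimizer α M`, attained at `π`. -/
noncomputable def minHeight (α M : ℝ) : ℝ := M / (2 * π) - 1 / (1 - α ^ 2)

theorem minHeight_pos (hα : α ^ 2 < 1) (hM : 2 * π < M * (1 - α ^ 2)) : 0 < minHeight α M := by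
  rw [minHeight, sub_pos, div_lt_div_iff₀ (sub_pos.2 hα) two_pi_pos]
  linarith

theorem minHeight_le_minimizer (hα : α ^ 2 < 1) (θ : ℝ) : minHeight α M ≤ minimizer α M θ := by
  have h : -1 / (1 - α ^ 2) ≤ cos θ / (1 - α ^ 2) :=
    div_le_div_of_nonneg_right (neg_one_le_cos θ) (sub_nonneg.2 hα.le)
  rw [minHeight, minimizer]
  linarith [neg_div (1 - α ^ 2) 1]

theorem isSmoothPeriodic_minimizer : IsSmoothPeriodic (minimizer α M) where
  contDiff := by unfold minimizer; fun_prop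
  periodic θ := by simp only [minimizer, cos_add_two_pi]

theorem integral_minimizer : ∫ θ in (-π)..π, minimizer α M θ = M := by
  simp (disch := exact Continuous.intervalIntegrable (by fun_prop) _ _) only [minimizer,
    intervalIntegral.integral_add, intervalIntegral.integral_div, integral_cos,
    intervalIntegral.integral_const, sin_pi, sin_neg, smul_eq_mul]
  field_simp
  ring

theorem deriv_minimizer : deriv (minimizer α M) = fun θ => -sin θ / (1 - α ^ 2) :=
  funext fun θ => (((hasDerivAt_cos θ).div_const _).const_add _).deriv

theorem helmholtz_minimizer (hα : α ^ 2 < 1) (θ : ℝ) :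
    helmholtz α (minimizer α M) θ = α ^ 2 * (M / (2 * π)) - cos θ := by
  have hβ : 1 - α ^ 2 ≠ 0 := (sub_pos.2 hα).ne'
  have h : deriv (deriv (minimizer α M)) θ = -cos θ / (1 - α ^ 2) := by
    rw [deriv_minimizer]
    exact ((hasDerivAt_sin θ).neg.div_const _).deriv
  rw [helmholtz, h, minimizer]
  field_simp
  ring

theorem helmholtz_deriv_minimizer (hα : α ^ 2 < 1) :
    helmholtz α (deriv (minimizer α M)) = sin := by
  rw [← deriv_helmholtz isSmoothPeriodic_minimizer, funext (helmholtz_minimizer hα)]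
  exact funext fun θ => by simp

theorem energy_eq (α : ℝ) (f : ℝ → ℝ) :
    energy α f = quadForm α f / 2 - ∫ θ in (-π)..π, f θ * cos θ := by
  rw [energy, quadForm, one_div_mul_eq_div]

theorem integral_sub_minimizer (hf : Continuous f) (hM : ∫ θ in (-π)..π, f θ = M) :
    ∫ θ in (-π)..π, (f - minimizer α M) θ = 0 := by
  have hw := (isSmoothPeriodic_minimizer (α := α) (M := M)).continuous
  simp only [Pi.sub_apply]
  rw [intervalIntegral.integral_sub (hf.intervalIntegrable _ _) (hw.intervalIntegrable _ _), hM,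
    integral_minimizer, sub_self]

theorem deriv_sub_minimizer (hf : Differentiable ℝ f) (θ : ℝ) :
    deriv (f - minimizer α M) θ = deriv f θ - deriv (minimizer α M) θ :=
  deriv_sub (hf θ) (isSmoothPeriodic_minimizer.differentiable θ)

theorem energy_eq_energy_minimizer_add (hα : α ^ 2 < 1) (hf : IsSmoothPeriodic f)
    (hM : ∫ θ in (-π)..π, f θ = M) :
    energy α f = energy α (minimizer α M) + quadForm α (f - minimizer α M) / 2 := by
  have hw := isSmoothPeriodic_minimizer (α := α) (M := M)
  obtain ⟨v, hv, rfl⟩ : ∃ v, IsSmoothPeriodic v ∧ f = minimizer α M + v :=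
    ⟨f - minimizer α M, hf.sub hw, by simp⟩
  have h0 := integral_sub_minimizer (α := α) hf.continuous hM
  rw [add_sub_cancel_left] at h0 ⊢
  have hv0 := hv.continuous
  have hw0 := hw.continuous
  have hcross : ∫ θ in (-π)..π, helmholtz α (minimizer α M) θ * v θ =
      -∫ θ in (-π)..π, v θ * cos θ := by
    simp (disch := exact Continuous.intervalIntegrable (by fun_prop) _ _) only [
      helmholtz_minimizer hα, sub_mul, mul_comm (cos _), intervalIntegral.integral_sub,
      intervalIntegral.integral_const_mul, h0, mul_zero, zero_sub]
  have hlin : ∫ θ in (-π)..π, (minimizer α M + v) θ * cos θ =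
      (∫ θ in (-π)..π, minimizer α M θ * cos θ) + ∫ θ in (-π)..π, v θ * cos θ := by
    simp (disch := exact Continuous.intervalIntegrable (by fun_prop) _ _) only [Pi.add_apply,
      add_mul, intervalIntegral.integral_add]
  rw [energy_eq, energy_eq, quadForm_add hw hv, hcross, hlin]
  ring

end Minimizer

section Parametric

variable {s : Set ℝ} {a b t : ℝ}

theorem hasDerivAt_integral_param {f f' : ℝ → ℝ → ℝ} (hs : IsOpen s)
    (hf : ContinuousOn (fun p : ℝ × ℝ => f p.1 p.2) (s ×ˢ univ))
    (hf' : ContinuousOn (fun p : ℝ × ℝ => f' p.1 p.2) (s ×ˢ univ))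
    (hd : ∀ t ∈ s, ∀ θ, HasDerivAt (fun τ => f τ θ) (f' t θ) t) (ht : t ∈ s) :
    HasDerivAt (fun τ => ∫ θ in a..b, f τ θ) (∫ θ in a..b, f' t θ) t := by
  have slice {g : ℝ → ℝ → ℝ} (hg : ContinuousOn (fun p : ℝ × ℝ => g p.1 p.2) (s ×ˢ univ))
      {τ : ℝ} (hτ : τ ∈ s) : Continuous (g τ) :=
    hg.comp_continuous (f := fun θ => (τ, θ)) (by fun_prop) fun θ => ⟨hτ, mem_univ _⟩
  obtain ⟨K, hK, htK, hKs⟩ := exists_compact_subset hs ht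
  obtain ⟨C, hC⟩ := (hK.prod isCompact_uIcc).exists_bound_of_continuousOn
    (hf'.mono (prod_mono hKs (subset_univ (uIcc a b))))
  refine (intervalIntegral.hasDerivAt_integral_of_dominated_loc_of_deriv_le
    (bound := fun _ => C) (mem_interior_iff_mem_nhds.1 htK) ?_
    ((slice hf ht).intervalIntegrable _ _) (slice hf' ht).aestronglyMeasurable
    (.of_forall fun θ hθ τ hτ => hC (τ, θ) ⟨hτ, uIoc_subset_uIcc hθ⟩)
    (continuous_const.intervalIntegrable _ _)
    (.of_forall fun θ _ τ hτ => hd τ (hKs hτ) θ)).2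
  filter_upwards [hs.mem_nhds ht] with τ hτ using (slice hf hτ).aestronglyMeasurable

theorem continuousOn_integral_param {f : ℝ → ℝ → ℝ}
    (hf : ContinuousOn (fun p : ℝ × ℝ => f p.1 p.2) (s ×ˢ univ)) :
    ContinuousOn (fun τ => ∫ θ in a..b, f τ θ) s := by
  have h : Continuous (Function.uncurry fun (τ : s) θ => f τ θ) :=
    hf.comp_continuous (f := fun p : s × ℝ => ((p.1 : ℝ), p.2)) (by fun_prop)
      fun p => ⟨p.1.2, mem_univ _⟩
  exact continuousOn_iff_continuous_domRestrict.2
    (intervalIntegral.continuous_parametric_intervalIntegral_of_continuous' h a b)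

end Parametric

section PartialDerivatives

variable {u : ℝ → ℝ → ℝ} {s : Set ℝ} {t : ℝ}

theorem contDiff_slice (hu : ContDiffOn ℝ ∞ (fun p : ℝ × ℝ => u p.1 p.2) (s ×ˢ univ))
    (ht : t ∈ s) : ContDiff ℝ ∞ (u t) :=
  hu.comp_contDiff (f := fun θ => (t, θ)) (by fun_prop) fun θ => ⟨ht, mem_univ _⟩

theorem hasDerivAt_left {θ : ℝ} (hu : DifferentiableAt ℝ (fun p : ℝ × ℝ => u p.1 p.2) (t, θ)) :
    HasDerivAt (fun τ => u τ θ) (fderiv ℝ (fun p : ℝ × ℝ => u p.1 p.2) (t, θ) (1, 0)) t :=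
  hu.hasFDerivAt.comp_hasDerivAt (f := fun τ : ℝ => (τ, θ)) t
    ((hasDerivAt_id' t).prodMk (hasDerivAt_const t θ))

theorem hasDerivAt_right {θ : ℝ} (hu : DifferentiableAt ℝ (fun p : ℝ × ℝ => u p.1 p.2) (t, θ)) :
    HasDerivAt (u t) (fderiv ℝ (fun p : ℝ × ℝ => u p.1 p.2) (t, θ) (0, 1)) θ :=
  hu.hasFDerivAt.comp_hasDerivAt (f := fun x : ℝ => (t, x)) θ
    ((hasDerivAt_const θ t).prodMk (hasDerivAt_id' θ))

theorem differentiableAt_of_contDiffOn_prod_univ (hs : IsOpen s)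
    (hu : ContDiffOn ℝ ∞ (fun p : ℝ × ℝ => u p.1 p.2) (s ×ˢ univ)) (ht : t ∈ s) (θ : ℝ) :
    DifferentiableAt ℝ (fun p : ℝ × ℝ => u p.1 p.2) (t, θ) :=
  (hu.contDiffAt ((hs.prod isOpen_univ).mem_nhds ⟨ht, mem_univ θ⟩)).differentiableAt (by simp)

theorem contDiffOn_deriv_left (hs : IsOpen s)
    (hu : ContDiffOn ℝ ∞ (fun p : ℝ × ℝ => u p.1 p.2) (s ×ˢ univ)) :
    ContDiffOn ℝ ∞ (fun p : ℝ × ℝ => deriv (fun τ => u τ p.2) p.1) (s ×ˢ univ) :=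
  ((hu.fderiv_of_isOpen (m := ∞) (hs.prod isOpen_univ) (by simp)).clm_apply
    (contDiffOn_const (c := ((1 : ℝ), (0 : ℝ))))).congr fun p hp =>
      (hasDerivAt_left (differentiableAt_of_contDiffOn_prod_univ hs hu hp.1 p.2)).deriv

theorem contDiffOn_deriv_right (hs : UniqueDiffOn ℝ s)
    (hu : ContDiffOn ℝ ∞ (fun p : ℝ × ℝ => u p.1 p.2) (s ×ˢ univ)) :
    ContDiffOn ℝ ∞ (fun p : ℝ × ℝ => deriv (u p.1) p.2) (s ×ˢ univ) := by
  refine ((hu.fderivWithin (m := ∞) (hs.prod uniqueDiffOn_univ) (by simp)).clm_apply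
    (contDiffOn_const (c := ((0 : ℝ), (1 : ℝ))))).congr fun p hp => ?_
  have hline : HasDerivWithinAt (fun θ : ℝ => (p.1, θ)) ((0 : ℝ), (1 : ℝ)) univ p.2 :=
    ((hasDerivAt_const _ _).prodMk (hasDerivAt_id' _)).hasDerivWithinAt
  have hcomp := (hu.differentiableOn (by simp) p hp).hasFDerivWithinAt.comp_hasDerivWithinAt
    (t := s ×ˢ univ) p.2 hline fun θ _ => ⟨hp.1, mem_univ _⟩
  exact (hasDerivWithinAt_univ.1 hcomp).deriv

theorem hasDerivAt_left_deriv_right (hs : IsOpen s)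
    (hu : ContDiffOn ℝ ∞ (fun p : ℝ × ℝ => u p.1 p.2) (s ×ˢ univ)) (ht : t ∈ s) (θ : ℝ) :
    HasDerivAt (fun τ => deriv (u τ) θ) (deriv (fun x => deriv (fun τ => u τ x) t) θ) t := by
  set U := fun p : ℝ × ℝ => u p.1 p.2
  have hmem : s ×ˢ (univ : Set ℝ) ∈ nhds (t, θ) := (hs.prod isOpen_univ).mem_nhds ⟨ht, mem_univ _⟩
  have hsymm : IsSymmSndFDerivAt ℝ U (t, θ) :=
    (hu.contDiffAt hmem).isSymmSndFDerivAt (by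
      rw [minSmoothness_of_isRCLikeNormedField]; exact WithTop.coe_le_coe.2 le_top)
  have hdiff : DifferentiableAt ℝ (fderiv ℝ U) (t, θ) :=
    ((hu.fderiv_of_isOpen (m := ∞) (hs.prod isOpen_univ) (by simp)).contDiffAt
      hmem).differentiableAt (by simp)
  have hpartial (w z : ℝ × ℝ) : DifferentiableAt ℝ (fun p => fderiv ℝ U p w) (t, θ) ∧
      fderiv ℝ (fun p => fderiv ℝ U p w) (t, θ) z = fderiv ℝ (fderiv ℝ U) (t, θ) z w := by
    have h := hdiff.hasFDerivAt.clm_apply (hasFDerivAt_const w (t, θ))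
    exact ⟨h.differentiableAt, by rw [h.fderiv]; simp⟩
  have hleft := hasDerivAt_left (u := fun τ x => fderiv ℝ U (τ, x) (0, 1)) (hpartial _ 0).1
  have hright := hasDerivAt_right (u := fun τ x => fderiv ℝ U (τ, x) (1, 0)) (hpartial _ 0).1
  rw [funext fun x => (hasDerivAt_left (differentiableAt_of_contDiffOn_prod_univ hs hu ht x)).deriv,
    hright.deriv, (hpartial _ _).2, hsymm.eq, ← (hpartial _ _).2]
  refine hleft.congr_of_eventuallyEq ?_
  filter_upwards [hs.mem_nhds ht] with τ hτ
  exact (hasDerivAt_right (differentiableAt_of_contDiffOn_prod_univ hs hu hτ θ)).deriv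

end PartialDerivatives

section QuadFormFamily

variable {z : ℝ → ℝ → ℝ} {s : Set ℝ} {α t : ℝ}

theorem isSmoothPeriodic_deriv_left (hs : IsOpen s)
    (hz : ContDiffOn ℝ ∞ (fun p : ℝ × ℝ => z p.1 p.2) (s ×ˢ univ))
    (pz : ∀ τ, Function.Periodic (z τ) (2 * π)) (ht : t ∈ s) :
    IsSmoothPeriodic fun θ => deriv (fun τ => z τ θ) t where
  contDiff := contDiff_slice (u := fun t θ => deriv (fun τ => z τ θ) t)
    (contDiffOn_deriv_left hs hz) ht
  periodic θ := congrArg (deriv · t) (funext fun τ => pz τ θ)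

theorem continuousOn_quadForm (hs : UniqueDiffOn ℝ s)
    (hz : ContDiffOn ℝ ∞ (fun p : ℝ × ℝ => z p.1 p.2) (s ×ˢ univ)) :
    ContinuousOn (fun τ => quadForm α (z τ)) s := by
  have hz0 := hz.continuousOn
  have hz1 := (contDiffOn_deriv_right hs hz).continuousOn
  exact continuousOn_integral_param
    (f := fun τ θ => deriv (z τ) θ ^ 2 - α ^ 2 * z τ θ ^ 2) (by fun_prop)

theorem hasDerivAt_quadForm (hs : IsOpen s)
    (hz : ContDiffOn ℝ ∞ (fun p : ℝ × ℝ => z p.1 p.2) (s ×ˢ univ))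
    (pz : ∀ τ, Function.Periodic (z τ) (2 * π)) (ht : t ∈ s) :
    HasDerivAt (fun τ => quadForm α (z τ))
      (-2 * ∫ θ in (-π)..π, helmholtz α (z t) θ * deriv (fun τ => z τ θ) t) t := by
  have hleft := contDiffOn_deriv_left hs hz
  have hright := contDiffOn_deriv_right hs.uniqueDiffOn hz
  have hz0 := hz.continuousOn
  have hz1 := hright.continuousOn
  have hzt := hleft.continuousOn
  have hzt1 := (contDiffOn_deriv_right (u := fun t θ => deriv (fun τ => z τ θ) t) hs.uniqueDiffOn
    hleft).continuousOn
  have h := hasDerivAt_integral_param (a := -π) (b := π) hs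
    (f := fun t θ => deriv (z t) θ ^ 2 - α ^ 2 * z t θ ^ 2)
    (f' := fun t θ => 2 * (deriv (z t) θ * deriv (fun x => deriv (fun τ => z τ x) t) θ -
      α ^ 2 * (z t θ * deriv (fun τ => z τ θ) t)))
    (by fun_prop) (by fun_prop) (fun t ht θ => by
      have hd := (hasDerivAt_left
        (differentiableAt_of_contDiffOn_prod_univ hs hz ht θ)).differentiableAt.hasDerivAt
      convert! ((hasDerivAt_left_deriv_right hs hz ht θ).fun_pow 2).fun_sub
        ((hd.fun_pow 2).const_mul (α ^ 2)) using 1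
      push_cast
      ring) ht
  rwa [intervalIntegral.integral_const_mul, integral_deriv_mul_deriv_sub
    ⟨contDiff_slice hz ht, pz t⟩ (isSmoothPeriodic_deriv_left hs hz pz ht), mul_neg,
    ← neg_mul] at h

end QuadFormFamily

section Decay

variable {n c k T : ℝ} {Q Q' : ℝ → ℝ}

theorem one_sub_mul_le_one_sub_rpow (hn : 0 ≤ n) {s : ℝ} (hs0 : 0 ≤ s) (hs1 : s < 1) :
    1 - (n + 1) * s ≤ (1 - s) ^ n :=
  calc 1 - (n + 1) * s = 1 + (n + 1) * (-s) := by ring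
    _ ≤ (1 + -s) ^ (n + 1) := one_add_mul_self_le_rpow_one_add (by linarith) (by linarith)
    _ ≤ (1 - s) ^ n :=
      rpow_le_rpow_of_exponent_ge (sub_pos.2 hs1) (sub_le_self 1 hs0) (by linarith)

theorem exists_lt_hasDerivAt_of_nonneg (hd : ∀ t, 0 < t → HasDerivAt Q (Q' t) t)
    (hQ : ∀ t, 0 < t → 0 ≤ Q t) {κ : ℝ} (hκ : 0 < κ) : ∃ t, 0 < t ∧ -κ < Q' t := by
  by_contra! h
  have hdiff : DifferentiableOn ℝ Q (Ici 1) := fun t ht =>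
    (hd t (one_pos.trans_le ht)).differentiableAt.differentiableWithinAt
  have hlong : (1 : ℝ) ≤ 1 + (Q 1 + 1) / κ := by
    have := hQ 1 one_pos
    exact le_add_of_nonneg_right (by positivity)
  have hdrop := (convex_Ici (1 : ℝ)).image_sub_le_mul_sub_of_deriv_le hdiff.continuousOn
    (hdiff.mono interior_subset) (C := -κ) (fun t ht => ?_) 1 self_mem_Ici _ hlong hlong
  · have hκ' : -κ * (1 + (Q 1 + 1) / κ - 1) = -(Q 1 + 1) := by field_simp; ring
    linarith [hQ _ (one_pos.trans_le hlong)]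
  · have ht0 : 0 < t := one_pos.trans_le (interior_subset ht)
    exact (hd t ht0).deriv ▸ h t ht0

theorem hasDerivAt_id_mul_zero {g : ℝ → ℝ} (hg : ContinuousAt g 0) :
    HasDerivAt (fun q => q * g q) (g 0) 0 := by
  rw [hasDerivAt_iff_tendsto_slope]
  refine (hg.tendsto.mono_left nhdsWithin_le_nhds).congr' ?_
  filter_upwards [self_mem_nhdsWithin] with q hq
  have hq0 : q ≠ 0 := hq
  simp [slope_def_field, hq0]

theorem hasDerivAt_div_one_sub_mul_sqrt_sq {q : ℝ} (hq : 0 ≤ q) (hk : k * √q < 1) :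
    HasDerivAt (fun q => q / (1 - k * √q) ^ 2) (1 / (1 - k * √q) ^ 3) q := by
  have hpos : 0 < 1 - k * √q := sub_pos.2 hk
  rcases hq.eq_or_lt with rfl | hq
  · convert! hasDerivAt_id_mul_zero (g := fun q => ((1 - k * √q) ^ 2)⁻¹) ?_ using 1
    · simp
    · exact ContinuousAt.inv₀ (by fun_prop) (by simp)
  · convert! (hasDerivAt_id' q).fun_div
      ((((hasDerivAt_sqrt hq.ne').const_mul k).const_sub 1).fun_pow 2) (by positivity) using 1
    have : 0 < √q := sqrt_pos.2 hq
    field_simp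
    push_cast
    linear_combination 2 * k * (1 - k * √q) * sq_sqrt hq.le

theorem mul_exp_le_of_hasDerivAt_le (hd : ∀ t, T ≤ t → HasDerivAt Q (Q' t) t)
    (hle : ∀ t, T ≤ t → Q' t ≤ -c * Q t) {t : ℝ} (ht : T ≤ t) :
    Q t * exp (c * t) ≤ Q T * exp (c * T) := by
  have hexp (t : ℝ) : HasDerivAt (fun t => exp (c * t)) (exp (c * t) * c) t := by
    simpa using ((hasDerivAt_id' t).const_mul c).exp
  have hmul (t : ℝ) (ht : T ≤ t) := (hd t ht).mul (hexp t)
  refine antitoneOn_of_hasDerivWithinAt_nonpos (convex_Ici T)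
    (fun t ht => (hmul t ht).continuousAt.continuousWithinAt)
    (fun t ht => (hmul t (interior_subset ht)).hasDerivWithinAt) (fun t ht => ?_)
    self_mem_Ici ht ht
  nlinarith [mul_le_mul_of_nonneg_right (hle t (interior_subset ht)) (exp_pos (c * t)).le]

/-- The correction `-k√Q` to the rate is integrable in time, so the limiting rate `c` is attained:
`Q / (1 - k√Q)²` satisfies the differential inequality with rate `c`. -/
theorem mul_exp_le_of_hasDerivAt_le_one_sub_mul_sqrt (hk : 0 ≤ k)
    (hd : ∀ t, T ≤ t → HasDerivAt Q (Q' t) t) (hQ : ∀ t, T ≤ t → 0 ≤ Q t)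
    (hkQ : ∀ t, T ≤ t → k * √(Q t) < 1)
    (hle : ∀ t, T ≤ t → Q' t ≤ -c * (1 - k * √(Q t)) * Q t) {t : ℝ} (ht : T ≤ t) :
    Q t * exp (c * t) ≤ Q T / (1 - k * √(Q T)) ^ 2 * exp (c * T) := by
  have hZ := mul_exp_le_of_hasDerivAt_le (c := c)
    (fun t ht => (hasDerivAt_div_one_sub_mul_sqrt_sq (hQ t ht) (hkQ t ht)).comp t (hd t ht))
    (fun t ht => ?_) ht
  · refine le_trans (mul_le_mul_of_nonneg_right ?_ (exp_pos _).le) hZ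
    refine (le_div_iff₀ (pow_pos (sub_pos.2 (hkQ t ht)) 2)).2 (mul_le_of_le_one_right (hQ t ht) ?_)
    exact pow_le_one₀ (sub_pos.2 (hkQ t ht)).le (sub_le_self _ (by positivity))
  · have hpos := sub_pos.2 (hkQ t ht)
    rw [one_div, inv_mul_le_iff₀ (by positivity)]
    refine (hle t ht).trans_eq ?_
    simp only [Function.comp_apply]
    field_simp

end Decay

section Flux

variable {n α M : ℝ} {f : ℝ → ℝ}

/-- The flux of the thin-film equation, which reads `∂ₜu + ∂_θ (flux n α u) = 0`. -/
noncomputable def flux (n α : ℝ) (f : ℝ → ℝ) (θ : ℝ) : ℝ :=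
  f θ ^ n * (helmholtz α (deriv f) θ - sin θ)

/-- The rate of energy dissipation of the thin-film equation. -/
noncomputable def dissipation (n α : ℝ) (f : ℝ → ℝ) : ℝ :=
  ∫ θ in (-π)..π, f θ ^ n * (helmholtz α (deriv f) θ - sin θ) ^ 2

theorem dissipation_nonneg (hf : ∀ θ, 0 < f θ) : 0 ≤ dissipation n α f :=
  intervalIntegral.integral_nonneg (by linarith [pi_pos]) fun θ _ =>
    mul_nonneg (rpow_nonneg (hf θ).le n) (sq_nonneg _)

theorem helmholtz_deriv_sub_sin (hα : α ^ 2 < 1) (hf : IsSmoothPeriodic f) (M θ : ℝ) :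
    helmholtz α (deriv f) θ - sin θ = helmholtz α (deriv (f - minimizer α M)) θ := by
  rw [funext (deriv_sub_minimizer hf.differentiable), ← helmholtz_deriv_minimizer hα (M := M)]
  exact (helmholtz_sub hf.deriv isSmoothPeriodic_minimizer.deriv θ).symm

theorem isSmoothPeriodic_flux (hf : IsSmoothPeriodic f) (hpos : ∀ θ, 0 < f θ) :
    IsSmoothPeriodic (flux n α f) where
  contDiff := (hf.contDiff.rpow_const_of_ne fun θ => (hpos θ).ne').mul
    ((isSmoothPeriodic_helmholtz hf.deriv).contDiff.sub contDiff_sin)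
  periodic θ := by
    simp only [flux, hf.periodic θ, (isSmoothPeriodic_helmholtz hf.deriv).periodic θ,
      sin_add_two_pi]

theorem integral_helmholtz_mul_deriv_flux (hα : α ^ 2 < 1) (hf : IsSmoothPeriodic f)
    (hpos : ∀ θ, 0 < f θ) :
    ∫ θ in (-π)..π, helmholtz α (f - minimizer α M) θ * deriv (flux n α f) θ =
      -dissipation n α f := by
  have hv := hf.sub (isSmoothPeriodic_minimizer (α := α) (M := M))
  have hH := isSmoothPeriodic_helmholtz (α := α) hv
  have hF := isSmoothPeriodic_flux (n := n) (α := α) hf hpos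
  rw [integral_mul_deriv_of_periodic hH.contDiff_one hF.contDiff_one hH.periodic hF.periodic,
    deriv_helmholtz hv, dissipation]
  congr 2 with θ
  rw [flux, ← helmholtz_deriv_sub_sin hα hf]
  ring

theorem mul_quadForm_le_dissipation (hn : 0 ≤ n) (hα : α ^ 2 < 1) (hf : IsSmoothPeriodic f)
    (hpos : ∀ θ, 0 < f θ) (hM : ∫ θ in (-π)..π, f θ = M) {k : ℝ} (hk : 0 ≤ k)
    (hkf : ∀ θ, k ≤ f θ) :
    (1 - α ^ 2) * k ^ n * quadForm α (f - minimizer α M) ≤ dissipation n α f := by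
  have hv := hf.sub (isSmoothPeriodic_minimizer (α := α) (M := M))
  have hH := (isSmoothPeriodic_helmholtz (α := α) hv.deriv).continuous
  have hfn : Continuous fun θ => f θ ^ n :=
    hf.continuous.rpow_const fun θ => .inl (hpos θ).ne'
  simp_rw [dissipation, helmholtz_deriv_sub_sin hα hf M]
  calc (1 - α ^ 2) * k ^ n * quadForm α (f - minimizer α M)
      = k ^ n * ((1 - α ^ 2) * quadForm α (f - minimizer α M)) := by ring
    _ ≤ k ^ n * ∫ θ in (-π)..π, helmholtz α (deriv (f - minimizer α M)) θ ^ 2 :=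
      mul_le_mul_of_nonneg_left
        (one_sub_sq_mul_quadForm_le_integral_helmholtz_deriv_sq hα.le hv
          (integral_sub_minimizer hf.continuous hM))
        (rpow_nonneg hk n)
    _ = ∫ θ in (-π)..π, k ^ n * helmholtz α (deriv (f - minimizer α M)) θ ^ 2 :=
      (intervalIntegral.integral_const_mul _ _).symm
    _ ≤ ∫ θ in (-π)..π, f θ ^ n * helmholtz α (deriv (f - minimizer α M)) θ ^ 2 :=
      intervalIntegral.integral_mono_on (by linarith [pi_pos])
        (Continuous.intervalIntegrable (by fun_prop) _ _)
        (Continuous.intervalIntegrable (by fun_prop) _ _) fun θ _ =>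
          mul_le_mul_of_nonneg_right (rpow_le_rpow hk (hkf θ) hn) (sq_nonneg _)

theorem minHeight_sub_sqrt_le (hα : α ^ 2 < 1) (hf : IsSmoothPeriodic f)
    (hM : ∫ θ in (-π)..π, f θ = M) (θ : ℝ) :
    minHeight α M - √(quadForm α (f - minimizer α M) / (1 - α ^ 2)) ≤ f θ := by
  have hv := hf.sub (isSmoothPeriodic_minimizer (α := α) (M := M))
  have h0 := integral_sub_minimizer (α := α) hf.continuous hM
  have h := (sq_le_integral_deriv_sq hv.contDiff_one hv.periodic h0 θ).trans
    (integral_deriv_sq_le hα hv h0)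
  have habs := (abs_le.1 (abs_le_sqrt h)).1
  rw [Pi.sub_apply] at habs
  linarith [minHeight_le_minimizer (M := M) hα θ]

/-- The constant `k` for which `Q = quadForm α (u - minimizer α M)` decays at a rate at least
`2μ (1 - k √Q)`, where `μ = (1 - α²) minHeightⁿ` is the limiting rate. -/
noncomputable def rateLoss (n α M : ℝ) : ℝ := (n + 1) / (√(1 - α ^ 2) * minHeight α M)

theorem rateLoss_pos (hn : 0 ≤ n) (hα : α ^ 2 < 1) (hm : 0 < minHeight α M) :
    0 < rateLoss n α M := by
  have := sqrt_pos.2 (sub_pos.2 hα)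
  rw [rateLoss]
  positivity

theorem minHeight_rpow_mul_quadForm_le_dissipation (hn : 0 ≤ n) (hα : α ^ 2 < 1)
    (hm : 0 < minHeight α M) (hf : IsSmoothPeriodic f) (hpos : ∀ θ, 0 < f θ)
    (hM : ∫ θ in (-π)..π, f θ = M)
    (hk : rateLoss n α M * √(quadForm α (f - minimizer α M)) < 1) :
    (1 - α ^ 2) * minHeight α M ^ n *
        (1 - rateLoss n α M * √(quadForm α (f - minimizer α M))) *
        quadForm α (f - minimizer α M) ≤ dissipation n α f := by
  set m := minHeight α M with hmdef
  set Q := quadForm α (f - minimizer α M)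
  have hβ : 0 < 1 - α ^ 2 := sub_pos.2 hα
  set r := √(Q / (1 - α ^ 2)) / m with hr
  have hr0 : 0 ≤ r := by positivity
  have hloss : rateLoss n α M * √Q = (n + 1) * r := by
    rw [rateLoss, ← hmdef, hr, sqrt_div' _ hβ.le]
    field_simp
  have hr1 : r < 1 := by nlinarith [mul_nonneg hn hr0]
  have hheight : m * (1 - r) = m - √(Q / (1 - α ^ 2)) := by rw [hr]; field_simp
  have hQ0 : 0 ≤ Q := quadForm_nonneg hα.le (hf.sub isSmoothPeriodic_minimizer)
    (integral_sub_minimizer hf.continuous hM)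
  have hheight0 : 0 ≤ m * (1 - r) := mul_nonneg hm.le (sub_pos.2 hr1).le
  calc (1 - α ^ 2) * m ^ n * (1 - rateLoss n α M * √Q) * Q
      ≤ (1 - α ^ 2) * m ^ n * (1 - r) ^ n * Q := by
        rw [hloss]
        have := one_sub_mul_le_one_sub_rpow hn hr0 hr1
        gcongr
    _ = (1 - α ^ 2) * (m * (1 - r)) ^ n * Q := by
        rw [mul_rpow hm.le (sub_pos.2 hr1).le, mul_assoc (1 - α ^ 2)]
    _ ≤ dissipation n α f := mul_quadForm_le_dissipation hn hα hf hpos hM hheight0 fun θ =>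
        hheight ▸ minHeight_sub_sqrt_le hα hf hM θ

end Flux

section Entropy

/-- The primitive of `y⁻ⁿ` vanishing at `1`. -/
noncomputable def entropyDensityDeriv (n y : ℝ) : ℝ := ∫ z in (1 : ℝ)..y, z ^ (-n)

/-- The convex entropy density `G` on `(0, ∞)` with `G'' = y⁻ⁿ` and `G 1 = G' 1 = 0`. -/
noncomputable def entropyDensity (n y : ℝ) : ℝ := ∫ z in (1 : ℝ)..y, entropyDensityDeriv n z

theorem hasDerivAt_integral_of_continuousOn_Ioi {f : ℝ → ℝ} (hf : ContinuousOn f (Ioi 0))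
    {a y : ℝ} (ha : 0 < a) (hy : 0 < y) : HasDerivAt (fun y => ∫ z in a..y, f z) (f y) y := by
  have hsub : uIcc a y ⊆ Ioi 0 := (convex_Ioi 0).ordConnected.uIcc_subset ha hy
  exact intervalIntegral.integral_hasDerivAt_right (hf.mono hsub).intervalIntegrable
    (hf.stronglyMeasurableAtFilter isOpen_Ioi y hy) (hf.continuousAt (Ioi_mem_nhds hy))

theorem hasDerivAt_entropyDensityDeriv (n : ℝ) {y : ℝ} (hy : 0 < y) :
    HasDerivAt (entropyDensityDeriv n) (y ^ (-n)) y :=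
  hasDerivAt_integral_of_continuousOn_Ioi (f := fun z => z ^ (-n))
    (fun z hz => (continuousAt_rpow_const z _ (.inl (ne_of_gt hz))).continuousWithinAt)
    one_pos hy

theorem continuousOn_entropyDensityDeriv (n : ℝ) :
    ContinuousOn (entropyDensityDeriv n) (Ioi 0) :=
  fun _ hz => (hasDerivAt_entropyDensityDeriv n hz).continuousAt.continuousWithinAt

theorem hasDerivAt_entropyDensity (n : ℝ) {y : ℝ} (hy : 0 < y) :
    HasDerivAt (entropyDensity n) (entropyDensityDeriv n y) y :=
  hasDerivAt_integral_of_continuousOn_Ioi (continuousOn_entropyDensityDeriv n) one_pos hy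

theorem entropyDensity_nonneg (n : ℝ) {y : ℝ} (hy : 0 < y) : 0 ≤ entropyDensity n y := by
  rcases le_total 1 y with h | h
  · refine intervalIntegral.integral_nonneg h fun s hs => ?_
    exact intervalIntegral.integral_nonneg hs.1 fun z hz => rpow_nonneg (by linarith [hz.1]) _
  · rw [entropyDensity, intervalIntegral.integral_symm, ← intervalIntegral.integral_neg]
    refine intervalIntegral.integral_nonneg h fun s hs => ?_
    rw [entropyDensityDeriv, ← intervalIntegral.integral_symm]
    exact intervalIntegral.integral_nonneg hs.2 fun z hz =>
      rpow_nonneg (by linarith [hz.1, hs.1]) _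

variable {n α M : ℝ} {f : ℝ → ℝ}

/-- The rate of decay of `∫ G(u)` along the thin-film equation, for the entropy density
`G = entropyDensity n`. It has no sign, but it is large where the film is thin. -/
noncomputable def entropyProduction (α M : ℝ) (f : ℝ → ℝ) : ℝ :=
  quadForm α (deriv (f - minimizer α M)) + ∫ θ in (-π)..π, (f - minimizer α M) θ * cos θ

theorem integral_deriv_mul_helmholtz_deriv (hα : α ^ 2 < 1) (hf : IsSmoothPeriodic f) (M : ℝ) :
    ∫ θ in (-π)..π, deriv f θ * helmholtz α (deriv (f - minimizer α M)) θ =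
      -entropyProduction α M f := by
  have hw := isSmoothPeriodic_minimizer (α := α) (M := M)
  obtain ⟨v, hv, rfl⟩ : ∃ v, IsSmoothPeriodic v ∧ f = minimizer α M + v :=
    ⟨f - minimizer α M, hf.sub hw, by simp⟩
  rw [entropyProduction, add_sub_cancel_left]
  have hw1 := hw.deriv.continuous
  have hv1 := hv.deriv.continuous
  have hH := (isSmoothPeriodic_helmholtz (α := α) hv.deriv).continuous
  have hcross : ∫ θ in (-π)..π, helmholtz α (deriv v) θ * deriv (minimizer α M) θ =
      -∫ θ in (-π)..π, v θ * cos θ := by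
    rw [integral_helmholtz_mul_comm hv.deriv hw.deriv, helmholtz_deriv_minimizer hα,
      ← integral_deriv_mul_sin hv.contDiff_one hv.periodic]
    simp only [mul_comm]
  have hadd (θ : ℝ) : deriv (minimizer α M + v) θ * helmholtz α (deriv v) θ =
      helmholtz α (deriv v) θ * deriv (minimizer α M) θ +
        helmholtz α (deriv v) θ * deriv v θ := by
    rw [deriv_add (hw.differentiable θ) (hv.differentiable θ)]
    ring
  simp (disch := exact Continuous.intervalIntegrable (by fun_prop) _ _) only [hadd,
    intervalIntegral.integral_add, hcross, quadForm_eq_neg_integral hv.deriv]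
  ring

theorem integral_entropyDensityDeriv_mul_deriv_flux (hα : α ^ 2 < 1) (hf : IsSmoothPeriodic f)
    (hpos : ∀ θ, 0 < f θ) (M : ℝ) :
    ∫ θ in (-π)..π, entropyDensityDeriv n (f θ) * deriv (flux n α f) θ =
      entropyProduction α M f := by
  have hF := isSmoothPeriodic_flux (n := n) (α := α) hf hpos
  have hG (θ : ℝ) : HasDerivAt (fun θ => entropyDensityDeriv n (f θ))
      (f θ ^ (-n) * deriv f θ) θ :=
    (hasDerivAt_entropyDensityDeriv n (hpos θ)).comp θ (hf.differentiable θ).hasDerivAt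
  have hG1 : ContDiff ℝ 1 fun θ => entropyDensityDeriv n (f θ) := by
    rw [contDiff_one_iff_deriv, funext fun θ => (hG θ).deriv]
    exact ⟨fun θ => (hG θ).differentiableAt,
      (hf.continuous.rpow_const fun θ => .inl (hpos θ).ne').mul hf.deriv.continuous⟩
  rw [integral_mul_deriv_of_periodic hG1 hF.contDiff_one
    (hf.periodic.comp (entropyDensityDeriv n)) hF.periodic,
    ← neg_neg (entropyProduction α M f), ← integral_deriv_mul_helmholtz_deriv hα hf]
  congr 2 with θ
  rw [(hG θ).deriv, flux, helmholtz_deriv_sub_sin hα hf M, mul_assoc, mul_left_comm (deriv f θ),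
    ← mul_assoc, ← rpow_add (hpos θ), neg_add_cancel, rpow_zero, one_mul]

theorem one_sub_sq_mul_add_pi_mul_cosCoeff_le_entropyProduction (hα : α ^ 2 < 1)
    (hf : IsSmoothPeriodic f) :
    (1 - α ^ 2) * (∫ θ in (-π)..π, deriv (f - minimizer α M) θ ^ 2) +
      π * cosCoeff (f - minimizer α M) ≤ entropyProduction α M f := by
  have hv := hf.sub (isSmoothPeriodic_minimizer (α := α) (M := M))
  have h0 := integral_deriv_eq_zero_of_periodic hv.contDiff_one hv.periodic
  rw [entropyProduction, integral_mul_cos_eq]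
  gcongr
  exact (mul_le_mul_of_nonneg_left (integral_sq_le_integral_deriv_sq hv.deriv h0)
    (sub_pos.2 hα).le).trans (one_sub_sq_mul_integral_deriv_sq_le_quadForm hv.deriv h0)

theorem neg_pi_mul_le_entropyProduction (hα : α ^ 2 < 1) (hf : IsSmoothPeriodic f) {m : ℝ}
    (hm : 0 ≤ m)
    (hD : ∫ θ in (-π)..π, deriv (f - minimizer α M) θ ^ 2 ≤ π * m ^ 2) :
    -(π * m) ≤ entropyProduction α M f := by
  have hv := hf.sub (isSmoothPeriodic_minimizer (α := α) (M := M))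
  have hbessel := pi_mul_sq_cosCoeff_add_sq_sinCoeff_le hv.contDiff_one hv.periodic
  have hcos : -m ≤ cosCoeff (f - minimizer α M) := by
    refine (abs_le_of_sq_le_sq' ?_ hm).1
    linarith [le_of_mul_le_mul_left (hbessel.trans hD) pi_pos,
      sq_nonneg (sinCoeff (f - minimizer α M))]
  have hnn : 0 ≤ ∫ θ in (-π)..π, deriv (f - minimizer α M) θ ^ 2 :=
    le_trans (by positivity) hbessel
  have h := one_sub_sq_mul_add_pi_mul_cosCoeff_le_entropyProduction (M := M) hα hf
  nlinarith [mul_nonneg (sub_pos.2 hα).le hnn, mul_le_mul_of_nonneg_left hcos pi_pos.le]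

theorem minHeight_div_le_of_entropyProduction_le (hα : α ^ 2 < 1) (hf : IsSmoothPeriodic f)
    (hM : ∫ θ in (-π)..π, f θ = M) (hm : 0 ≤ minHeight α M)
    (hD : ∫ θ in (-π)..π, deriv (f - minimizer α M) θ ^ 2 ≤ π * minHeight α M ^ 2)
    (hP : entropyProduction α M f ≤ π * minHeight α M / 10) (θ : ℝ) :
    minHeight α M / 20 ≤ f θ := by
  have hβ : 0 < 1 - α ^ 2 := sub_pos.2 hα
  set x := 1 / (1 - α ^ 2) with hx
  have hx0 : 0 < x := one_div_pos.2 hβ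
  have hv := hf.sub (isSmoothPeriodic_minimizer (α := α) (M := M))
  have h0 := integral_sub_minimizer (α := α) hf.continuous hM
  have hhigh := neg_mul_le_highModes hv.contDiff_one hv.periodic h0 hm hD θ
  have hfirst : -(x + minHeight α M / 10) ≤
      x * cos θ + firstMode (f - minimizer α M) θ := by
    refine neg_add_le_mul_cos_add_firstMode hx0.le (by positivity) ?_ θ
    have h := mul_le_mul_of_nonneg_left
      (pi_mul_sq_cosCoeff_add_sq_sinCoeff_le hv.contDiff_one hv.periodic) hβ.le
    have hle : (1 - α ^ 2) * (cosCoeff (f - minimizer α M) ^ 2 +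
        sinCoeff (f - minimizer α M) ^ 2) ≤
        minHeight α M / 10 - cosCoeff (f - minimizer α M) := by
      refine le_of_mul_le_mul_left ?_ pi_pos
      linarith [one_sub_sq_mul_add_pi_mul_cosCoeff_le_entropyProduction (M := M) hα hf]
    rw [hx, one_div_mul_eq_div]
    exact (le_div_iff₀' hβ).2 hle
  have hfθ : f θ = minHeight α M + x + x * cos θ + firstMode (f - minimizer α M) θ +
      highModes (f - minimizer α M) θ := by
    simp only [highModes, minHeight, minimizer, Pi.sub_apply, hx]
    ring
  linarith

theorem mul_quadForm_le_of_entropyProduction_add_le (hn : 0 ≤ n) (hα : α ^ 2 < 1)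
    (hf : IsSmoothPeriodic f) (hpos : ∀ θ, 0 < f θ) (hM : ∫ θ in (-π)..π, f θ = M)
    (hm : 0 ≤ minHeight α M)
    (hD : ∫ θ in (-π)..π, deriv (f - minimizer α M) θ ^ 2 ≤ π * minHeight α M ^ 2)
    {l : ℝ} (hl : 0 ≤ l)
    (hP : entropyProduction α M f + l * dissipation n α f ≤ π * minHeight α M / 10) :
    l * ((1 - α ^ 2) * (minHeight α M / 20) ^ n * quadForm α (f - minimizer α M)) ≤
      11 / 10 * (π * minHeight α M) := by
  have hdiss := mul_nonneg hl (dissipation_nonneg (n := n) (α := α) hpos)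
  have hheight := minHeight_div_le_of_entropyProduction_le hα hf hM hm hD (by linarith)
  have hgap := mul_le_mul_of_nonneg_left
    (mul_quadForm_le_dissipation hn hα hf hpos hM (div_nonneg hm (by norm_num)) hheight) hl
  linarith [neg_pi_mul_le_entropyProduction hα hf hm hD]

end Entropy

section Evolution

variable {u : ℝ → ℝ → ℝ} {n α M t : ℝ}

namespace IsThinFilmSolution

theorem isSmoothPeriodic (hu : IsThinFilmSolution n α u) (ht : 0 ≤ t) : IsSmoothPeriodic (u t) :=
  ⟨contDiff_slice hu.1 ht, hu.2.2.1 t⟩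

theorem pos (hu : IsThinFilmSolution n α u) (ht : 0 ≤ t) (θ : ℝ) : 0 < u t θ := hu.2.1 t θ ht

theorem contDiffOn_Ioi (hu : IsThinFilmSolution n α u) :
    ContDiffOn ℝ ∞ (fun p : ℝ × ℝ => u p.1 p.2) (Ioi 0 ×ˢ univ) :=
  hu.1.mono (prod_mono Ioi_subset_Ici_self subset_rfl)

theorem deriv_time (hu : IsThinFilmSolution n α u) (ht : 0 < t) (θ : ℝ) :
    deriv (fun s => u s θ) t = -deriv (flux n α (u t)) θ :=
  eq_neg_of_add_eq_zero_left (hu.2.2.2 t θ ht)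

theorem hasDerivAt_time (hu : IsThinFilmSolution n α u) (ht : 0 < t) (θ : ℝ) :
    HasDerivAt (fun s => u s θ) (-deriv (flux n α (u t)) θ) t := by
  rw [← hu.deriv_time ht]
  exact (hasDerivAt_left (differentiableAt_of_contDiffOn_prod_univ isOpen_Ioi hu.contDiffOn_Ioi
    ht θ)).differentiableAt.hasDerivAt

theorem continuousOn_deriv_flux (hu : IsThinFilmSolution n α u) :
    ContinuousOn (fun p : ℝ × ℝ => deriv (flux n α (u p.1)) p.2) (Ioi 0 ×ˢ univ) :=
  (contDiffOn_deriv_left isOpen_Ioi hu.contDiffOn_Ioi).continuousOn.neg.congr fun p hp => by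
    simp only [hu.deriv_time hp.1, Pi.neg_apply, neg_neg]

theorem integral_eq (hu : IsThinFilmSolution n α u) (ht : 0 ≤ t) :
    ∫ θ in (-π)..π, u t θ = ∫ θ in (-π)..π, u 0 θ := by
  have hcont := continuousOn_integral_param (a := -π) (b := π) hu.1.continuousOn
  have hderiv (s : ℝ) (hs : 0 < s) : HasDerivAt (fun s => ∫ θ in (-π)..π, u s θ) 0 s := by
    have hF := isSmoothPeriodic_flux (n := n) (α := α) (hu.isSmoothPeriodic hs.le) (hu.pos hs.le)
    have h := hasDerivAt_integral_param (a := -π) (b := π) isOpen_Ioi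
      hu.contDiffOn_Ioi.continuousOn hu.continuousOn_deriv_flux.neg
      (fun s hs θ => hu.hasDerivAt_time hs θ) hs
    rwa [intervalIntegral.integral_neg,
      integral_deriv_eq_zero_of_periodic hF.contDiff_one hF.periodic, neg_zero] at h
  rcases ht.eq_or_lt with rfl | ht
  · rfl
  obtain ⟨_, -, hslope⟩ := exists_hasDerivAt_eq_slope _ (fun _ => 0) ht
    (hcont.mono Icc_subset_Ici_self) fun s hs => hderiv s hs.1
  rw [eq_comm, div_eq_zero_iff, or_iff_left (by linarith)] at hslope
  exact sub_eq_zero.1 hslope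

theorem contDiffOn_sub_minimizer (hu : IsThinFilmSolution n α u) : ContDiffOn ℝ ∞
    (fun p : ℝ × ℝ => (u p.1 - minimizer α M) p.2) (Ici 0 ×ˢ univ) :=
  hu.1.sub (isSmoothPeriodic_minimizer.contDiff.comp contDiff_snd).contDiffOn

theorem continuousOn_quadForm (hu : IsThinFilmSolution n α u) :
    ContinuousOn (fun t => quadForm α (u t - minimizer α M)) (Ici 0) :=
  _root_.continuousOn_quadForm (uniqueDiffOn_Ici 0) hu.contDiffOn_sub_minimizer

theorem hasDerivAt_quadForm (hu : IsThinFilmSolution n α u) (hα : α ^ 2 < 1) (ht : 0 < t) :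
    HasDerivAt (fun t => quadForm α (u t - minimizer α M)) (-2 * dissipation n α (u t)) t := by
  have h := _root_.hasDerivAt_quadForm (α := α) isOpen_Ioi
    ((hu.contDiffOn_sub_minimizer (M := M)).mono (prod_mono Ioi_subset_Ici_self subset_rfl))
    (fun t => (hu.2.2.1 t).sub isSmoothPeriodic_minimizer.periodic) ht
  have htime (θ : ℝ) : deriv (fun s => (u s - minimizer α M) θ) t =
      -deriv (flux n α (u t)) θ :=
    ((hu.hasDerivAt_time ht θ).sub_const _).deriv
  simpa only [htime, mul_neg, intervalIntegral.integral_neg, neg_neg,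
    integral_helmholtz_mul_deriv_flux hα (hu.isSmoothPeriodic ht.le) (hu.pos ht.le)] using h

theorem hasDerivAt_entropy (hu : IsThinFilmSolution n α u) (hα : α ^ 2 < 1) (M : ℝ)
    (ht : 0 < t) :
    HasDerivAt (fun t => ∫ θ in (-π)..π, entropyDensity n (u t θ))
      (-entropyProduction α M (u t)) t := by
  have hu0 := hu.contDiffOn_Ioi.continuousOn
  have hpos : MapsTo (fun p : ℝ × ℝ => u p.1 p.2) (Ioi 0 ×ˢ univ) (Ioi 0) :=
    fun p hp => hu.pos (le_of_lt hp.1) p.2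
  have hG : ContinuousOn (entropyDensity n) (Ioi 0) := fun y hy =>
    (hasDerivAt_entropyDensity n hy).continuousAt.continuousWithinAt
  have h := hasDerivAt_integral_param (a := -π) (b := π) isOpen_Ioi
    (f := fun t θ => entropyDensity n (u t θ))
    (f' := fun t θ => -(entropyDensityDeriv n (u t θ) * deriv (flux n α (u t)) θ))
    (hG.comp hu0 hpos)
    (((continuousOn_entropyDensityDeriv n).comp hu0 hpos).mul hu.continuousOn_deriv_flux).neg
    (fun t ht θ => by
      rw [← mul_neg]
      exact (hasDerivAt_entropyDensity n (hu.pos (le_of_lt ht) θ)).comp t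
        (hu.hasDerivAt_time ht θ)) ht
  rwa [intervalIntegral.integral_neg, integral_entropyDensityDeriv_mul_deriv_flux hα
    (hu.isSmoothPeriodic ht.le) (hu.pos ht.le)] at h

theorem antitoneOn_quadForm (hu : IsThinFilmSolution n α u) (hα : α ^ 2 < 1) :
    AntitoneOn (fun t => quadForm α (u t - minimizer α M)) (Ici 0) := by
  refine antitoneOn_of_hasDerivWithinAt_nonpos (convex_Ici 0) hu.continuousOn_quadForm
    (f' := fun t => -2 * dissipation n α (u t)) ?_ ?_ <;> rw [interior_Ici]
  · exact fun t ht => (hu.hasDerivAt_quadForm hα ht).hasDerivWithinAt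
  · exact fun t ht => by linarith [dissipation_nonneg (n := n) (α := α) (hu.pos (le_of_lt ht))]

theorem integral_sub_minimizer (hu : IsThinFilmSolution n α u)
    (hM : ∫ θ in (-π)..π, u 0 θ = M) (ht : 0 ≤ t) :
    ∫ θ in (-π)..π, (u t - minimizer α M) θ = 0 :=
  _root_.integral_sub_minimizer (hu.isSmoothPeriodic ht).continuous ((hu.integral_eq ht).trans hM)

theorem quadForm_nonneg (hu : IsThinFilmSolution n α u) (hα : α ^ 2 < 1)
    (hM : ∫ θ in (-π)..π, u 0 θ = M) (ht : 0 ≤ t) :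
    0 ≤ quadForm α (u t - minimizer α M) :=
  _root_.quadForm_nonneg hα.le ((hu.isSmoothPeriodic ht).sub isSmoothPeriodic_minimizer)
    (hu.integral_sub_minimizer hM ht)

theorem integral_deriv_sq_le (hu : IsThinFilmSolution n α u) (hα : α ^ 2 < 1)
    (hM : ∫ θ in (-π)..π, u 0 θ = M)
    (h0 : quadForm α (u 0 - minimizer α M) ≤ (1 - α ^ 2) * (π * minHeight α M ^ 2))
    (ht : 0 ≤ t) :
    ∫ θ in (-π)..π, deriv (u t - minimizer α M) θ ^ 2 ≤ π * minHeight α M ^ 2 :=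
  (_root_.integral_deriv_sq_le hα ((hu.isSmoothPeriodic ht).sub isSmoothPeriodic_minimizer)
    (hu.integral_sub_minimizer hM ht)).trans ((div_le_iff₀' (sub_pos.2 hα)).2
      ((hu.antitoneOn_quadForm hα self_mem_Ici ht ht).trans h0))

theorem exists_quadForm_le (hu : IsThinFilmSolution n α u) (hn : 0 ≤ n) (hα : α ^ 2 < 1)
    (hm : 0 < minHeight α M) (hM : ∫ θ in (-π)..π, u 0 θ = M)
    (h0 : quadForm α (u 0 - minimizer α M) ≤ (1 - α ^ 2) * (π * minHeight α M ^ 2))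
    {δ : ℝ} (hδ : 0 < δ) : ∃ T, 0 < T ∧ quadForm α (u T - minimizer α M) ≤ δ := by
  have : 0 < 1 - α ^ 2 := sub_pos.2 hα
  have hk : 0 < (1 - α ^ 2) * (minHeight α M / 20) ^ n := by positivity
  set k := (1 - α ^ 2) * (minHeight α M / 20) ^ n with hkdef
  set l := 11 / 20 * (π * minHeight α M) / (k * δ) with hl
  have hl0 : 0 < l := by positivity
  obtain ⟨T, hT, hderiv⟩ := exists_lt_hasDerivAt_of_nonneg
    (Q := fun t => (∫ θ in (-π)..π, entropyDensity n (u t θ)) +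
      l * quadForm α (u t - minimizer α M))
    (fun t ht => (hu.hasDerivAt_entropy hα M ht).add ((hu.hasDerivAt_quadForm hα ht).const_mul l))
    (fun t ht => add_nonneg (intervalIntegral.integral_nonneg (by linarith [pi_pos])
      fun θ _ => entropyDensity_nonneg n (hu.pos ht.le θ))
      (mul_nonneg hl0.le (hu.quadForm_nonneg hα hM ht.le)))
    (by positivity : 0 < π * minHeight α M / 10)
  have hbound := mul_quadForm_le_of_entropyProduction_add_le hn hα (hu.isSmoothPeriodic hT.le)
    (hu.pos hT.le) ((hu.integral_eq hT.le).trans hM) hm.le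
    (hu.integral_deriv_sq_le hα hM h0 hT.le) (by positivity : 0 ≤ 2 * l) (by linarith)
  have hδl : 2 * l * (k * δ) = 11 / 10 * (π * minHeight α M) := by
    rw [hl]
    field_simp
    norm_num
  rw [← hkdef, ← hδl] at hbound
  exact ⟨T, hT, le_of_mul_le_mul_left (le_of_mul_le_mul_left hbound (by positivity)) hk⟩

theorem exists_quadForm_mul_exp_le (hu : IsThinFilmSolution n α u) (hn : 0 ≤ n)
    (hα : α ^ 2 < 1) (hm : 0 < minHeight α M) (hM : ∫ θ in (-π)..π, u 0 θ = M)
    (h0 : quadForm α (u 0 - minimizer α M) ≤ (1 - α ^ 2) * (π * minHeight α M ^ 2)) :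
    ∃ K, ∀ t, 0 ≤ t → quadForm α (u t - minimizer α M) *
      exp (2 * ((1 - α ^ 2) * minHeight α M ^ n) * t) ≤ K := by
  have : 0 < 1 - α ^ 2 := sub_pos.2 hα
  have hk := rateLoss_pos hn hα hm
  obtain ⟨T, hT, hQT⟩ := hu.exists_quadForm_le hn hα hm hM h0
    (by positivity : 0 < (1 / (2 * rateLoss n α M)) ^ 2)
  have hanti := hu.antitoneOn_quadForm (M := M) hα
  have hsmall (t : ℝ) (ht : T ≤ t) :
      rateLoss n α M * √(quadForm α (u t - minimizer α M)) < 1 := by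
    have hsqrt := sqrt_le_iff.2 ⟨by positivity,
      (hanti hT.le (hT.le.trans ht) ht).trans hQT⟩
    have := mul_le_mul_of_nonneg_left hsqrt hk.le
    field_simp at this
    linarith
  have hlate (t : ℝ) (ht : T ≤ t) := mul_exp_le_of_hasDerivAt_le_one_sub_mul_sqrt hk.le
    (c := 2 * ((1 - α ^ 2) * minHeight α M ^ n))
    (fun t ht => hu.hasDerivAt_quadForm hα (hT.trans_le ht))
    (fun t ht => hu.quadForm_nonneg hα hM (hT.le.trans ht)) hsmall
    (fun t ht => by
      have ht0 := hT.le.trans ht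
      linarith [minHeight_rpow_mul_quadForm_le_dissipation hn hα hm (hu.isSmoothPeriodic ht0)
        (hu.pos ht0) ((hu.integral_eq ht0).trans hM) (hsmall t ht)]) ht
  refine ⟨_, fun t ht => (le_total T t).elim
    (fun h => (hlate t h).trans (le_max_left _ _)) fun h => le_max_of_le_right
      (mul_le_mul (hanti self_mem_Ici ht ht) (exp_le_exp.2 (mul_le_mul_of_nonneg_left h ?_))
        (exp_pos _).le (hu.quadForm_nonneg hα hM le_rfl))⟩
  positivity

theorem exists_sqrt_quadForm_le (hu : IsThinFilmSolution n α u) (hn : 0 ≤ n)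
    (hα : α ^ 2 < 1) (hm : 0 < minHeight α M) (hM : ∫ θ in (-π)..π, u 0 θ = M)
    (h0 : quadForm α (u 0 - minimizer α M) ≤ (1 - α ^ 2) * (π * minHeight α M ^ 2)) :
    ∃ K, ∀ t, 0 ≤ t → √(quadForm α (u t - minimizer α M)) ≤
      K * exp (-((1 - α ^ 2) * minHeight α M ^ n) * t) := by
  obtain ⟨K, hK⟩ := hu.exists_quadForm_mul_exp_le hn hα hm hM h0
  refine ⟨√K, fun t ht => ?_⟩
  set μ := (1 - α ^ 2) * minHeight α M ^ n
  have hsplit : exp (2 * μ * t) = exp (μ * t) ^ 2 := by rw [← exp_nat_mul]; push_cast; ring_nf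
  rw [neg_mul, exp_neg, ← div_eq_mul_inv, le_div_iff₀ (exp_pos _), ← sqrt_sq (exp_pos (μ * t)).le,
    ← sqrt_mul (hu.quadForm_nonneg hα hM ht), ← hsplit]
  exact sqrt_le_sqrt (hK t ht)

end IsThinFilmSolution

end Evolution

/-- Local exponential attractivity of the strictly positive minimizer:
for `0 ≤ α < 1`, `M(1−α²) > 2π`, `u*(θ) = M/(2π) + cos θ/(1−α²)`, `m = min u*`,
`μ = (1−α²)mⁿ`, `ε₀ = ((1−α²)π/2)m²`, every strictly positive classical solution of mass
`M` whose initial energy satisfies `E(u(0,·)) < E(u*) + ε₀` converges to `u*` in `H¹` at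
exponential rate: `‖u(t,·) − u*‖_{H¹} ≤ K₁ e^{−μt}`. -/
theorem exponential_convergence (n α M : ℝ) (hn : 0 < n) (hα0 : 0 ≤ α) (hα1 : α < 1)
    (hmass : M * (1 - α^2) > 2*π)
    (ustar : ℝ → ℝ) (hstar : ∀ θ : ℝ, ustar θ = M / (2*π) + Real.cos θ / (1 - α^2))
    (m μ ε₀ : ℝ) (hm : m = M / (2*π) - 1 / (1 - α^2))
    (hμ : μ = (1 - α^2) * m ^ n) (hε₀ : ε₀ = ((1 - α^2) * π / 2) * m^2)
    (u : ℝ → ℝ → ℝ) (hu : IsThinFilmSolution n α u)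
    (humass : (∫ θ in (-π)..π, u 0 θ) = M)
    (hE0 : energy α (u 0) < energy α ustar + ε₀) :
    ∃ K₁ : ℝ, ∀ t : ℝ, 0 ≤ t →
      Real.sqrt (∫ θ in (-π)..π,
          ((u t θ - ustar θ)^2 + (deriv (u t) θ - deriv ustar θ)^2)) ≤
        K₁ * Real.exp (-μ * t) := by
  obtain rfl : ustar = minimizer α M := funext hstar
  obtain rfl : m = minHeight α M := hm
  subst hμ hε₀
  have hα : α ^ 2 < 1 := (sq_lt_one_iff₀ hα0).2 hα1
  have h0 : quadForm α (u 0 - minimizer α M) ≤ (1 - α ^ 2) * (π * minHeight α M ^ 2) := by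
    linarith [energy_eq_energy_minimizer_add hα (hu.isSmoothPeriodic le_rfl) humass]
  obtain ⟨K, hK⟩ := hu.exists_sqrt_quadForm_le hn.le hα (minHeight_pos hα hmass) humass h0
  refine ⟨√(2 / (1 - α ^ 2)) * K, fun t ht => ?_⟩
  have hv := (hu.isSmoothPeriodic ht).sub (isSmoothPeriodic_minimizer (α := α) (M := M))
  have hnorm := sqrt_integral_sq_add_deriv_sq_le hα hv (hu.integral_sub_minimizer humass ht)
  simp only [deriv_sub_minimizer (hu.isSmoothPeriodic ht).differentiable, Pi.sub_apply] at hnorm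
  rw [mul_assoc]
  exact hnorm.trans (mul_le_mul_of_nonneg_left (hK t ht) (sqrt_nonneg _))
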